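/- For every integer j with 0 ≤ j ≤ 52, the space S_{j,2}(Γ₂) of Siegel cusp forms of degree 2 and weight (j,2) on the full Siegel modular group Γ₂ = Sp(4,ℤ) is zero. -/

import Mathlib

noncomputable section

open Matrix Complex Filter Topology

/-- The standard symplectic form matrix of size 4. -/
def J4 : Matrix (Fin 4) (Fin 4) ℤ := !![0,0,1,0; 0,0,0,1; -1,0,0,0; 0,-1,0,0]

/-- The Siegel modular group `Γ₂ = Sp(4,ℤ)`, as a set of 4×4 integer matrices. -/
def Sp4Z : Set (Matrix (Fin 4) (Fin 4) ℤ) := {γ | γᵀ * J4 * γ = J4}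

/-- The principal congruence subgroup `Γ₂[2]` of level 2. -/
def Sp4Z2 : Set (Matrix (Fin 4) (Fin 4) ℤ) :=
  {γ | γ ∈ Sp4Z ∧ ∀ i j, ((γ i j : ZMod 2) = if i = j then 1 else 0)}

/-- The Siegel upper half space of degree 2: symmetric 2×2 complex matrices with
positive definite imaginary part (encoded as functions `Fin 2 → Fin 2 → ℂ`). -/
def H2 : Set (Fin 2 → Fin 2 → ℂ) :=
  {τ | (Matrix.of τ).IsSymm ∧ (Matrix.of fun i j => (τ i j).im).PosDef}

/-- The four 2×2 blocks of a 4×4 integer matrix, as complex matrices. -/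
def blk (γ : Matrix (Fin 4) (Fin 4) ℤ) (r s : Fin 2) : Matrix (Fin 2) (Fin 2) ℂ :=
  Matrix.of fun i j =>
    ((γ ⟨2 * (r : ℕ) + (i : ℕ), by have h1 := r.isLt; have h2 := i.isLt; omega⟩
        ⟨2 * (s : ℕ) + (j : ℕ), by have h1 := s.isLt; have h2 := j.isLt; omega⟩ : ℤ) : ℂ)

/-- The factor `cτ + d`. -/
def den (γ : Matrix (Fin 4) (Fin 4) ℤ) (τ : Fin 2 → Fin 2 → ℂ) : Matrix (Fin 2) (Fin 2) ℂ :=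
  blk γ 1 0 * Matrix.of τ + blk γ 1 1

/-- The action `γ·τ = (aτ+b)(cτ+d)⁻¹` of `Sp(4)` on the Siegel upper half space. -/
def moeb (γ : Matrix (Fin 4) (Fin 4) ℤ) (τ : Fin 2 → Fin 2 → ℂ) : Fin 2 → Fin 2 → ℂ :=
  fun i j => ((blk γ 0 0 * Matrix.of τ + blk γ 0 1) * (den γ τ)⁻¹) i j

/-- Matrix coefficients of the `j`-th symmetric power of the standard representation of
`GL(2,ℂ)`, in the basis `x₁^(j-i) x₂^i`. -/
def symCoeff (j : ℕ) (m : Matrix (Fin 2) (Fin 2) ℂ) (l i : Fin (j + 1)) : ℂ :=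
  (((Polynomial.C (m 0 0) + Polynomial.C (m 1 0) * Polynomial.X) ^ (j - (l : ℕ)) *
    (Polynomial.C (m 0 1) + Polynomial.C (m 1 1) * Polynomial.X) ^ (l : ℕ)).coeff i)

/-- The `j`-th symmetric power `Sym^j(m)` acting on coordinate vectors. -/
def symAct (j : ℕ) (m : Matrix (Fin 2) (Fin 2) ℂ) (v : Fin (j + 1) → ℂ) : Fin (j + 1) → ℂ :=
  fun i => ∑ l, symCoeff j m l i * v l

lemma symAct_add (j : ℕ) (m : Matrix (Fin 2) (Fin 2) ℂ) (v w : Fin (j + 1) → ℂ) :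
    symAct j m (v + w) = symAct j m v + symAct j m w := by
  funext i
  simp [symAct, mul_add, Finset.sum_add_distrib]

lemma symAct_smul (j : ℕ) (m : Matrix (Fin 2) (Fin 2) ℂ) (a : ℂ) (v : Fin (j + 1) → ℂ) :
    symAct j m (a • v) = a • symAct j m v := by
  funext i
  simp only [symAct, Pi.smul_apply, smul_eq_mul, Finset.mul_sum]
  exact Finset.sum_congr rfl fun l _ => by ring

lemma symAct_zero (j : ℕ) (m : Matrix (Fin 2) (Fin 2) ℂ) : symAct j m 0 = 0 := by
  funext i; simp [symAct]

/-- The weight `(j,k)` automorphy action `Sym^j(m) ⊗ det(m)^k`. -/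
def wt (j : ℕ) (k : ℤ) (m : Matrix (Fin 2) (Fin 2) ℂ) (v : Fin (j + 1) → ℂ) :
    Fin (j + 1) → ℂ :=
  (m.det ^ k) • symAct j m v

lemma wt_add (j : ℕ) (k : ℤ) (m : Matrix (Fin 2) (Fin 2) ℂ) (v w : Fin (j + 1) → ℂ) :
    wt j k m (v + w) = wt j k m v + wt j k m w := by
  simp [wt, symAct_add, smul_add]

lemma wt_smul (j : ℕ) (k : ℤ) (m : Matrix (Fin 2) (Fin 2) ℂ) (a : ℂ) (v : Fin (j + 1) → ℂ) :
    wt j k m (a • v) = a • wt j k m v := by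
  rw [wt, wt, symAct_smul, smul_comm]

lemma wt_zero (j : ℕ) (k : ℤ) (m : Matrix (Fin 2) (Fin 2) ℂ) : wt j k m 0 = 0 := by
  simp [wt, symAct_zero]

/-- The slash operation `(F|γ)(τ) = Sym^j(cτ+d)⁻¹ det(cτ+d)⁻ᵏ F(γ·τ)`. -/
def slashS (j : ℕ) (k : ℤ) (γ : Matrix (Fin 4) (Fin 4) ℤ)
    (F : (Fin 2 → Fin 2 → ℂ) → (Fin (j + 1) → ℂ)) (τ : Fin 2 → Fin 2 → ℂ) :
    Fin (j + 1) → ℂ :=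
  ((den γ τ).det ^ (-k)) • symAct j ((den γ τ)⁻¹) (F (moeb γ τ))

lemma slashS_add (j : ℕ) (k : ℤ) (γ : Matrix (Fin 4) (Fin 4) ℤ)
    (F G : (Fin 2 → Fin 2 → ℂ) → (Fin (j + 1) → ℂ)) (τ : Fin 2 → Fin 2 → ℂ) :
    slashS j k γ (F + G) τ = slashS j k γ F τ + slashS j k γ G τ := by
  simp [slashS, symAct_add, smul_add]

lemma slashS_smul (j : ℕ) (k : ℤ) (γ : Matrix (Fin 4) (Fin 4) ℤ) (a : ℂ)
    (F : (Fin 2 → Fin 2 → ℂ) → (Fin (j + 1) → ℂ)) (τ : Fin 2 → Fin 2 → ℂ) :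
    slashS j k γ (a • F) τ = a • slashS j k γ F τ := by
  simp only [slashS, Pi.smul_apply, symAct_smul]
  rw [smul_comm]

lemma slashS_zero (j : ℕ) (k : ℤ) (γ : Matrix (Fin 4) (Fin 4) ℤ) (τ : Fin 2 → Fin 2 → ℂ) :
    slashS j k γ (0 : (Fin 2 → Fin 2 → ℂ) → (Fin (j + 1) → ℂ)) τ = 0 := by
  simp [slashS, symAct_zero]

/-- The diagonal point `diag(τ₁,τ₂)` of the Siegel upper half space. -/
def diagH (τ₁ τ₂ : ℂ) : Fin 2 → Fin 2 → ℂ :=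
  fun i j => if i = j then (if i = 0 then τ₁ else τ₂) else 0

/-- `F` is a Siegel cusp form of degree 2 and weight `(j,k)` on `Γ`, with character `χ`:
holomorphic on `ℍ₂`, transforming by `F(γ·τ) = χ(γ) Sym^j(cτ+d) det(cτ+d)^k F(τ)` for `γ ∈ Γ`,
with `(F|γ)(diag(τ₁,it)) → 0` as `t → ∞` for every `γ ∈ Γ₂`, and (normalization) vanishing
off `ℍ₂`. -/
def IsSiegelCuspForm (j : ℕ) (k : ℤ) (Γ : Set (Matrix (Fin 4) (Fin 4) ℤ))
    (χ : Matrix (Fin 4) (Fin 4) ℤ → ℂ)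
    (F : (Fin 2 → Fin 2 → ℂ) → (Fin (j + 1) → ℂ)) : Prop :=
  DifferentiableOn ℂ F H2 ∧
  (∀ γ ∈ Γ, ∀ τ ∈ H2, F (moeb γ τ) = χ γ • wt j k (den γ τ) (F τ)) ∧
  (∀ γ ∈ Sp4Z, ∀ τ₁ : ℂ, 0 < τ₁.im →
    Tendsto (fun t : ℝ => slashS j k γ F (diagH τ₁ (t * Complex.I))) atTop (𝓝 0)) ∧
  (∀ τ, τ ∉ H2 → F τ = 0)

/-- The space `S_{j,k}(Γ, χ)` of Siegel cusp forms of degree 2 and weight `(j,k)` on `Γ`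
with character `χ`, as a complex vector space. -/
def SiegelCusp (j : ℕ) (k : ℤ) (Γ : Set (Matrix (Fin 4) (Fin 4) ℤ))
    (χ : Matrix (Fin 4) (Fin 4) ℤ → ℂ) :
    Submodule ℂ ((Fin 2 → Fin 2 → ℂ) → (Fin (j + 1) → ℂ)) where
  carrier := {F | IsSiegelCuspForm j k Γ χ F}
  add_mem' := by
    rintro F G hF hG
    refine ⟨hF.1.add hG.1, ?_, ?_, ?_⟩
    · intro γ hγ τ hτ
      show F (moeb γ τ) + G (moeb γ τ) = χ γ • wt j k (den γ τ) (F τ + G τ)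
      rw [wt_add, smul_add, hF.2.1 γ hγ τ hτ, hG.2.1 γ hγ τ hτ]
    · intro γ hγ τ₁ hτ
      have h := (hF.2.2.1 γ hγ τ₁ hτ).add (hG.2.2.1 γ hγ τ₁ hτ)
      rw [add_zero] at h
      exact h.congr fun t => (slashS_add j k γ F G _).symm
    · intro τ hτ
      show F τ + G τ = 0
      rw [hF.2.2.2 τ hτ, hG.2.2.2 τ hτ, add_zero]
  zero_mem' := by
    refine ⟨?_, ?_, ?_, ?_⟩
    · exact differentiableOn_const 0
    · intro γ hγ τ hτ
      show (0 : Fin (j + 1) → ℂ) = χ γ • wt j k (den γ τ) 0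
      rw [wt_zero, smul_zero]
    · intro γ hγ τ₁ hτ
      have : (fun t : ℝ => slashS j k γ (0 : (Fin 2 → Fin 2 → ℂ) → (Fin (j + 1) → ℂ))
          (diagH τ₁ (t * Complex.I))) = fun _ => 0 := by
        funext t; exact slashS_zero j k γ _
      rw [this]
      exact tendsto_const_nhds
    · intro τ _; rfl
  smul_mem' := by
    rintro a F hF
    refine ⟨hF.1.const_smul a, ?_, ?_, ?_⟩
    · intro γ hγ τ hτ
      show a • F (moeb γ τ) = χ γ • wt j k (den γ τ) (a • F τ)
      rw [hF.2.1 γ hγ τ hτ, wt_smul, smul_comm]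
    · intro γ hγ τ₁ hτ
      have h := (hF.2.2.1 γ hγ τ₁ hτ).const_smul a
      rw [smul_zero] at h
      exact h.congr fun t => (slashS_smul j k γ a F _).symm
    · intro τ hτ
      show a • F τ = 0
      rw [hF.2.2.2 τ hτ, smul_zero]

/-- `ε` is (on `Γ₂`) the unique nontrivial homomorphism `Γ₂ → {±1}`. -/
def IsEps (ε : Matrix (Fin 4) (Fin 4) ℤ → ℂ) : Prop :=
  (∀ γ ∈ Sp4Z, ε γ = 1 ∨ ε γ = -1) ∧
  (∀ γ ∈ Sp4Z, ∀ δ ∈ Sp4Z, ε (γ * δ) = ε γ * ε δ) ∧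
  (∃ γ ∈ Sp4Z, ε γ ≠ 1)

namespace SV

open scoped UpperHalfPlane in
lemma disc_T (z : ℍ) : ModularForm.discriminant ((1:ℝ) +ᵥ z) = ModularForm.discriminant z := by
  have h := congrFun ModularForm.discriminant_T_invariant z
  rw [ModularForm.SL_slash_apply, ModularGroup.denom_apply, UpperHalfPlane.modular_T_smul] at h
  simpa [ModularGroup.T] using h

open scoped UpperHalfPlane in
lemma disc_S (z : ℍ) : ModularForm.discriminant (ModularGroup.S • z) =
    (z:ℂ)^12 * ModularForm.discriminant z := by
  have h := congrFun ModularForm.discriminant_S_invariant z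
  rw [ModularForm.SL_slash_apply, ModularGroup.denom_apply] at h
  rw [← h]
  have := z.ne_zero
  simp [ModularGroup.S]
  field_simp

open scoped UpperHalfPlane in
lemma level_one_zero (Ψ : ℂ → ℂ) (W : ℕ) (α C : ℝ)
    (hd : DifferentiableOn ℂ Ψ {τ | 0 < τ.im})
    (hT : ∀ τ : ℂ, 0 < τ.im → ‖Ψ (τ + 1)‖ = ‖Ψ τ‖)
    (hS : ∀ τ : ℂ, 0 < τ.im → ‖Ψ (-1 / τ)‖ = ‖τ‖ ^ W * ‖Ψ τ‖)
    (hb : ∀ τ : ℂ, 1 ≤ τ.im → ‖Ψ τ‖ ≤ C * Real.exp (-2 * Real.pi * (α * τ.im)))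
    (hα : (W : ℝ) < 12 * α) : ∀ τ : ℂ, 0 < τ.im → Ψ τ = 0 := by
  set H : ℂ → ℂ := fun τ => Ψ τ ^ 12 / (ModularForm.eta τ ^ 24) ^ W with hH
  have hHd : DifferentiableOn ℂ H {τ | 0 < τ.im} := by
    apply DifferentiableOn.div
    · exact hd.pow 12
    · intro z hz
      exact (((ModularForm.differentiableAt_eta_of_mem_upperHalfPlaneSet hz).pow 24).pow
        W).differentiableWithinAt
    · intro z hz
      exact pow_ne_zero _ (pow_ne_zero _ (ModularForm.eta_ne_zero hz))
  have hHz : ∀ z : ℍ, H z = Ψ z ^ 12 / (ModularForm.discriminant z) ^ W := fun z => rfl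
  have hinv : ∀ g : SpecialLinearGroup (Fin 2) ℤ, ∀ z : ℍ, ‖H ↑(g • z)‖ = ‖H z‖ := by
    intro g
    have hg : g ∈ Subgroup.closure {ModularGroup.S, ModularGroup.T} := by
      simp [SpecialLinearGroup.SL2Z_generators]
    induction hg using Subgroup.closure_induction with
    | mem x hx =>
      rcases hx with rfl | hx
      · intro z
        rw [hHz, hHz, disc_S]
        have h1 : ((ModularGroup.S • z : ℍ) : ℂ) = -1 / (z:ℂ) := by
          rw [UpperHalfPlane.modular_S_smul]; simp [neg_div, inv_neg]
        rw [h1, norm_div, norm_pow, hS z z.2]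
        have hz : ‖(z:ℂ)‖ ≠ 0 := by simpa using z.ne_zero
        have hD : ‖ModularForm.discriminant z‖ ≠ 0 := by
          simpa using ModularForm.discriminant_ne_zero z
        simp only [norm_pow, norm_mul, norm_div]
        field_simp
        ring
      · rw [Set.mem_singleton_iff] at hx
        subst hx
        intro z
        rw [hHz, hHz, UpperHalfPlane.modular_T_smul, disc_T]
        have h1 : (((1:ℝ) +ᵥ z : ℍ) : ℂ) = z + 1 := by simp [add_comm]
        rw [h1, norm_div, norm_pow, hT z z.2, norm_div, norm_pow, norm_pow]
    | one => simp
    | mul x y _ _ hx hy => intro z; rw [mul_smul, hx, hy]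
    | inv x _ hx => intro z; rw [← hx (x⁻¹ • z), smul_inv_smul]
  -- decay
  have hdec : Tendsto (fun z : ℍ => ‖H z‖) UpperHalfPlane.atImInfty (𝓝 0) := by
    obtain ⟨c, hc, hcb⟩ := ModularForm.exp_isBigO_discriminant.exists_pos
    rw [Asymptotics.isBigOWith_iff] at hcb
    have hC : 0 ≤ C := by
      have := (norm_nonneg _).trans (hb (I) (by simp))
      by_contra hneg
      push Not at hneg
      nlinarith [Real.exp_pos (-2 * Real.pi * (α * I.im))]
    have hlim : Tendsto (fun z : ℍ => C^12 * c^W *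
        Real.exp (-(2 * Real.pi * (12 * α - W)) * z.im)) UpperHalfPlane.atImInfty (𝓝 0) := by
      have h0 : Tendsto (fun y : ℝ => Real.exp (-(2 * Real.pi * (12 * α - W)) * y)) atTop (𝓝 0) := by
        apply Real.tendsto_exp_atBot.comp
        apply Tendsto.const_mul_atTop_of_neg _ tendsto_id
        have := Real.pi_pos
        have : 0 < 2 * Real.pi * (12 * α - W) := by apply mul_pos <;> linarith
        linarith
      have h1 : Tendsto (fun z : ℍ => z.im) UpperHalfPlane.atImInfty atTop := tendsto_comap
      have := (h0.comp h1).const_mul (C^12 * c^W)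
      simpa using this
    refine squeeze_zero' (Eventually.of_forall fun _ => norm_nonneg _) ?_ hlim
    have hy : ∀ᶠ z : ℍ in UpperHalfPlane.atImInfty, 1 ≤ z.im :=
      (tendsto_comap : Tendsto UpperHalfPlane.im UpperHalfPlane.atImInfty atTop).eventually_ge_atTop 1
    filter_upwards [hcb, hy] with z hz1 hz2
    rw [hHz, norm_div, norm_pow, norm_pow]
    have hD : 0 < ‖ModularForm.discriminant z‖ := by
      simpa using ModularForm.discriminant_ne_zero z
    rw [Real.norm_of_nonneg (Real.exp_pos _).le] at hz1
    rw [div_le_iff₀ (pow_pos hD _)]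
    have e1 : ‖Ψ z‖ ^ 12 ≤ (C * Real.exp (-2 * Real.pi * (α * z.im)))^12 :=
      pow_le_pow_left₀ (norm_nonneg _) (hb z hz2) 12
    have e2 := pow_le_pow_left₀ (Real.exp_pos _).le hz1 W
    have e3 : (C * Real.exp (-2 * Real.pi * (α * z.im)))^12 =
       C^12 * Real.exp (-(2 * Real.pi * (12 * α - W)) * z.im) * (Real.exp (-2 * Real.pi * z.im))^W := by
      rw [mul_pow, ← Real.exp_nat_mul, ← Real.exp_nat_mul, mul_assoc (C^12), ← Real.exp_add]
      congr 2
      push_cast; ring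
    rw [e3] at e1
    refine e1.trans ?_
    rw [mul_pow] at e2
    calc _ ≤ C^12 * Real.exp (-(2 * Real.pi * (12 * α - W)) * z.im) *
          (c^W * ‖ModularForm.discriminant z‖^W) := by gcongr
      _ = _ := by ring
  -- maximum
  by_contra hne
  push Not at hne
  obtain ⟨τ0, hτ0, hne⟩ := hne
  have hH0 : 0 < ‖H τ0‖ := by
    rw [norm_pos_iff]
    exact div_ne_zero (pow_ne_zero _ hne) (pow_ne_zero _ (pow_ne_zero _ (ModularForm.eta_ne_zero hτ0)))
  have hev : ∀ᶠ z : ℍ in UpperHalfPlane.atImInfty, ‖H z‖ < ‖H τ0‖ := hdec.eventually_lt_const hH0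
  obtain ⟨Y, hY⟩ := (UpperHalfPlane.atImInfty_mem _).1 hev
  set K : Set ℂ := {w : ℂ | |w.re| ≤ 1/2 ∧ 1 ≤ Complex.normSq w ∧ 1/2 ≤ w.im ∧ w.im ≤ Y} with hK
  have hKc : IsCompact K := by
    apply Metric.isCompact_of_isClosed_isBounded
    · apply IsClosed.inter
      · exact isClosed_le (continuous_abs.comp Complex.continuous_re) continuous_const
      apply IsClosed.inter
      · exact isClosed_le continuous_const (Complex.continuous_normSq)
      apply IsClosed.inter
      · exact isClosed_le continuous_const Complex.continuous_im
      · exact isClosed_le Complex.continuous_im continuous_const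
    · rw [Metric.isBounded_iff_subset_closedBall 0]
      refine ⟨1 + |Y|, ?_⟩
      intro w hw
      rw [mem_closedBall_zero_iff]
      refine (Complex.norm_le_abs_re_add_abs_im w).trans ?_
      have := hw.1
      have h2 : |w.im| ≤ |Y| := by
        rw [abs_of_nonneg (by linarith [hw.2.2.1])]; exact hw.2.2.2.trans (le_abs_self _)
      linarith
  have hKH : K ⊆ {τ | 0 < τ.im} := fun w hw => by
    have := hw.2.2.1
    simp only [Set.mem_ofPred_eq]; linarith
  have hred : ∀ τ : ℂ, 0 < τ.im → ‖H τ0‖ ≤ ‖H τ‖ → ∃ w ∈ K, ‖H w‖ = ‖H τ‖ := by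
    intro τ hτ hle
    obtain ⟨g, hg⟩ := ModularGroup.exists_smul_mem_fd ⟨τ, hτ⟩
    refine ⟨((g • (⟨τ, hτ⟩ : ℍ) : ℍ) : ℂ), ?_, hinv g ⟨τ, hτ⟩⟩
    set z := g • (⟨τ, hτ⟩ : ℍ) with hz
    have h3 := ModularGroup.three_le_four_mul_im_sq_of_mem_fd hg
    have him : 0 < z.im := z.2
    refine ⟨hg.2, hg.1, ?_, ?_⟩
    · change 1/2 ≤ z.im
      nlinarith
    · change z.im ≤ Y
      by_contra hcon
      push Not at hcon
      have := hY z hcon.le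
      have h5 := hinv g ⟨τ, hτ⟩
      change ‖H z‖ < ‖H τ0‖ at this
      change ‖H z‖ = ‖H τ‖ at h5
      linarith
  obtain ⟨w0, hw0, hw0e⟩ := hred τ0 hτ0 le_rfl
  have hcont : ContinuousOn (fun w => ‖H w‖) K := (hHd.continuousOn.mono hKH).norm
  obtain ⟨w1, hw1, hmax⟩ := hKc.exists_isMaxOn ⟨w0, hw0⟩ hcont
  have hm : IsMaxOn (norm ∘ H) {τ | 0 < τ.im} w1 := by
    intro τ hτ
    change ‖H τ‖ ≤ ‖H w1‖
    by_cases hle : ‖H τ0‖ ≤ ‖H τ‖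
    · obtain ⟨w, hw, hwe⟩ := hred τ hτ hle
      rw [← hwe]; exact hmax hw
    · push Not at hle
      have : ‖H w0‖ ≤ ‖H w1‖ := hmax hw0
      linarith
  have hpre : IsPreconnected {τ : ℂ | 0 < τ.im} := (convex_halfSpace_im_gt 0).isPreconnected
  have hopen : IsOpen {τ : ℂ | 0 < τ.im} := isOpen_lt continuous_const Complex.continuous_im
  have hconst := Complex.eqOn_of_isPreconnected_of_isMaxOn_norm hpre hopen hHd (hKH hw1) hm
  have hYY : 0 < max Y 1 := by positivity
  have hz := hY ⟨max Y 1 * I, by simp [hYY]⟩ (by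
    show Y ≤ (max Y 1 * I : ℂ).im
    simp)
  change ‖H (max Y 1 * I)‖ < ‖H τ0‖ at hz
  have h1 := hconst (x := (max Y 1 * I : ℂ)) (by simp [hYY])
  have h2 := hconst hτ0
  rw [h1, h2] at hz
  exact lt_irrefl _ hz

end SV

namespace SV
set_option linter.unusedSectionVars false

/-- `e(x) = exp(2πix)` -/
def ee (x : ℂ) : ℂ := Complex.exp (2 * Real.pi * I * x)

section Mean
open MeasureTheory

local instance instMSC : MeasureSpace UnitAddCircle := ⟨AddCircle.haarAddCircle⟩
local instance instHaarC : Measure.IsAddHaarMeasure (volume : Measure UnitAddCircle) :=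
  inferInstanceAs (Measure.IsAddHaarMeasure AddCircle.haarAddCircle)
local instance instProbC : IsProbabilityMeasure (volume : Measure UnitAddCircle) :=
  inferInstanceAs (IsProbabilityMeasure AddCircle.haarAddCircle)

variable {d : Type} [Fintype d]

/-- representative in the unit cube -/
def rep (q : UnitAddTorus d) : d → ℝ := fun i => (AddCircle.equivIco (1:ℝ) 0 (q i) : ℝ)

def tmk (x : d → ℝ) : UnitAddTorus d := fun i => ((x i : ℝ) : UnitAddCircle)

def cx (x : d → ℝ) : d → ℂ := fun i => (x i : ℂ)

def imv (w : d → ℂ) : d → ℝ := fun i => (w i).im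

lemma continuous_cx : Continuous (cx : (d → ℝ) → (d → ℂ)) := by
  unfold cx; fun_prop

lemma continuous_imv : Continuous (imv : (d → ℂ) → (d → ℝ)) := by
  unfold imv
  exact continuous_pi fun i => Complex.continuous_im.comp (continuous_apply i)

lemma rep_spec (q : UnitAddTorus d) : tmk (rep q) = q := by
  funext i
  exact (AddCircle.equivIco (1:ℝ) 0).symm_apply_apply (q i)

lemma rep_mem (q : UnitAddTorus d) : rep q ∈ Set.Icc (0 : d → ℝ) 1 := by
  constructor
  · intro i
    exact (AddCircle.equivIco (1:ℝ) 0 (q i)).2.1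
  · intro i
    have := (AddCircle.equivIco (1:ℝ) 0 (q i)).2.2
    simp only [zero_add] at this
    exact this.le

lemma tmk_eq {x y : d → ℝ} (h : tmk x = tmk y) : ∃ k : d → ℤ, ∀ i, x i = y i + k i := by
  have : ∀ i, ∃ k : ℤ, x i = y i + k := by
    intro i
    have h1 : ((x i : ℝ) : UnitAddCircle) = ((y i : ℝ) : UnitAddCircle) := congrFun h i
    rw [← sub_eq_zero, ← AddCircle.coe_sub, AddCircle.coe_eq_zero_iff] at h1
    obtain ⟨k, hk⟩ := h1
    exact ⟨k, by simp at hk; linarith⟩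
  choose k hk using this
  exact ⟨k, hk⟩

lemma tmk_open : IsOpenQuotientMap (tmk : (d → ℝ) → UnitAddTorus d) :=
  IsOpenQuotientMap.piMap (fun _ => QuotientAddGroup.isOpenQuotientMap_mk)

/-- periodic function on tube -/
structure PerHol (Y : Set (d → ℝ)) (h : (d → ℂ) → ℂ) : Prop where
  diff : DifferentiableOn ℂ h {w | imv w ∈ Y}
  per : ∀ w, imv w ∈ Y → ∀ k : d → ℤ, h (w + fun i => (k i : ℂ)) = h w

variable {Y : Set (d → ℝ)} {h : (d → ℂ) → ℂ}

lemma imv_add_cx (w : d → ℂ) (x : d → ℝ) : imv (cx x + w) = imv w := by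
  funext i; simp [imv, cx]

lemma tube_open (hY : IsOpen Y) : IsOpen {w : d → ℂ | imv w ∈ Y} := hY.preimage continuous_imv

lemma PerHol.rep_tmk (hh : PerHol Y h) {w : d → ℂ} (hw : imv w ∈ Y) (x : d → ℝ) :
    h (cx (rep (tmk x)) + w) = h (cx x + w) := by
  obtain ⟨k, hk⟩ := tmk_eq (rep_spec (tmk x))
  rw [← hh.per (cx x + w) (by rwa [imv_add_cx]) k]
  congr 1
  funext i
  simp only [cx, Pi.add_apply, hk]
  push_cast; ring

lemma PerHol.cont (hh : PerHol Y h) {w : d → ℂ} (hw : imv w ∈ Y) :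
    Continuous (fun q : UnitAddTorus d => h (cx (rep q) + w)) := by
  rw [← tmk_open.continuous_comp_iff]
  have : (fun q : UnitAddTorus d => h (cx (rep q) + w)) ∘ tmk = fun x => h (cx x + w) := by
    funext x; exact hh.rep_tmk hw x
  rw [this]
  refine hh.diff.continuousOn.comp_continuous (continuous_cx.add continuous_const) ?_
  intro x
  rw [Set.mem_ofPred_eq, imv_add_cx]; exact hw

def mean (h : (d → ℂ) → ℂ) (w : d → ℂ) : ℂ := ∫ q : UnitAddTorus d, h (cx (rep q) + w)

lemma PerHol.mean_shift (hh : PerHol Y h) {w : d → ℂ} (hw : imv w ∈ Y) (s : d → ℝ) :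
    mean h (cx s + w) = mean h w := by
  unfold mean
  rw [← integral_add_right_eq_self (fun q : UnitAddTorus d => h (cx (rep q) + w)) (tmk s)]
  congr 1
  funext q
  have : q + tmk s = tmk (rep q + s) := by
    conv_lhs => rw [← rep_spec q]
    funext i; simp [tmk]
  rw [this, hh.rep_tmk hw]
  congr 1
  funext i; simp [cx]; ring

lemma PerHol.mean_hasDeriv (hY : IsOpen Y) (hh : PerHol Y h) (w v : d → ℂ) (ζ₀ : ℂ)
    (hw : imv (w + ζ₀ • v) ∈ Y) :
    DifferentiableAt ℂ (fun ζ : ℂ => mean h (w + ζ • v)) ζ₀ := by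
  have hpc : Continuous (fun ζ : ℂ => w + ζ • v) := by fun_prop
  have hpo : IsOpen {ζ : ℂ | imv (w + ζ • v) ∈ Y} := (tube_open hY).preimage hpc
  obtain ⟨ε, hε, hball⟩ := Metric.isOpen_iff.1 hpo ζ₀ hw
  set δ := ε / 4 with hδ
  have hδ0 : 0 < δ := by positivity
  have hcb : ∀ ζ ∈ Metric.closedBall ζ₀ (2*δ), imv (w + ζ • v) ∈ Y := by
    intro ζ hζ
    apply hball
    rw [Metric.mem_closedBall] at hζ
    rw [Metric.mem_ball]; linarith
  have hdq : ∀ q : UnitAddTorus d, DifferentiableOn ℂ (fun ζ : ℂ => h (cx (rep q) + (w + ζ • v)))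
      {ζ : ℂ | imv (w + ζ • v) ∈ Y} := by
    intro q
    have : DifferentiableOn ℂ (fun ζ : ℂ => cx (rep q) + (w + ζ • v))
      {ζ : ℂ | imv (w + ζ • v) ∈ Y} := by fun_prop
    refine hh.diff.comp this ?_
    intro ζ hζ
    rw [Set.mem_ofPred_eq, imv_add_cx]; exact hζ
  have hcomp : IsCompact ((fun p : (d → ℝ) × ℂ => cx p.1 + (w + p.2 • v)) ''
      (Set.Icc 0 1 ×ˢ Metric.closedBall ζ₀ (2*δ))) := by
    apply (isCompact_Icc.prod (isCompact_closedBall _ _)).image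
    apply Continuous.add (continuous_cx.comp continuous_fst)
    fun_prop
  obtain ⟨C, hC⟩ := hcomp.exists_bound_of_continuousOn (f := h) (hh.diff.continuousOn.mono (by
    rintro _ ⟨p, hp, rfl⟩
    rw [Set.mem_ofPred_eq, imv_add_cx]; exact hcb _ hp.2))
  have hC' : ∀ q : UnitAddTorus d, ∀ ζ ∈ Metric.closedBall ζ₀ (2*δ),
      ‖h (cx (rep q) + (w + ζ • v))‖ ≤ C := fun q ζ hζ => hC _ ⟨(rep q, ζ), ⟨rep_mem q, hζ⟩, rfl⟩
  have hda : ∀ q : UnitAddTorus d, ∀ ζ ∈ Metric.ball ζ₀ δ,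
      HasDerivAt (fun ζ : ℂ => h (cx (rep q) + (w + ζ • v)))
      (deriv (fun ζ : ℂ => h (cx (rep q) + (w + ζ • v))) ζ) ζ := by
    intro q ζ hζ
    apply DifferentiableAt.hasDerivAt
    apply (hdq q).differentiableAt
    apply hpo.mem_nhds
    apply hcb
    rw [Metric.mem_ball] at hζ
    rw [Metric.mem_closedBall]; linarith
  have key := hasDerivAt_integral_of_dominated_loc_of_deriv_le (𝕜 := ℂ)
    (μ := (volume : Measure (UnitAddTorus d)))
    (F := fun ζ q => h (cx (rep q) + (w + ζ • v)))
    (F' := fun ζ q => deriv (fun ζ : ℂ => h (cx (rep q) + (w + ζ • v))) ζ)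
    (x₀ := ζ₀) (bound := fun _ => C / δ) (s := Metric.ball ζ₀ δ) (Metric.ball_mem_nhds _ hδ0)
    ?_ ?_ ?_ ?_ ?_ ?_
  · exact key.2.differentiableAt
  · filter_upwards [Metric.ball_mem_nhds ζ₀ hδ0] with ζ hζ
    apply (hh.cont (hcb ζ _)).aestronglyMeasurable
    rw [Metric.mem_ball] at hζ
    rw [Metric.mem_closedBall]; linarith
  · refine Integrable.of_bound (hh.cont hw).aestronglyMeasurable C (Eventually.of_forall ?_)
    intro q
    exact hC' q _ (Metric.mem_closedBall_self (by positivity))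
  · have hu : Tendsto (fun n : ℕ => ((δ / (n + 1) : ℝ) : ℂ)) atTop (𝓝[≠] 0) := by
      rw [tendsto_nhdsWithin_iff]
      constructor
      · rw [show (0:ℂ) = ((0:ℝ):ℂ) by simp]
        refine (Complex.continuous_ofReal.tendsto 0).comp ?_
        exact tendsto_const_div_atTop_nhds_zero_nat δ |>.comp (tendsto_add_atTop_nat 1) |>.congr
          (fun n => by simp)
      · refine Eventually.of_forall fun n => ?_
        have : δ / (n + 1 : ℝ) ≠ 0 := by positivity
        rw [Set.mem_compl_singleton_iff, Complex.ofReal_ne_zero]; exact this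
    refine aestronglyMeasurable_of_tendsto_ae atTop (f := fun (n : ℕ) (q : UnitAddTorus d) =>
      ((δ / (n + 1) : ℝ) : ℂ)⁻¹ • (h (cx (rep q) + (w + (ζ₀ + ((δ / (n + 1) : ℝ) : ℂ)) • v))
        - h (cx (rep q) + (w + ζ₀ • v)))) ?_ ?_
    · intro n
      apply Continuous.aestronglyMeasurable
      simp only [smul_eq_mul]
      refine continuous_const.mul ((hh.cont (hcb _ ?_)).sub (hh.cont hw))
      rw [Metric.mem_closedBall, dist_eq_norm]
      simp only [add_sub_cancel_left]
      rw [Complex.norm_of_nonneg (by positivity)]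
      have : δ / (n + 1 : ℝ) ≤ δ := div_le_self hδ0.le (by linarith [Nat.cast_nonneg (α := ℝ) n])
      linarith
    · refine Eventually.of_forall fun q => ?_
      have := hda q ζ₀ (Metric.mem_ball_self hδ0)
      exact (hasDerivAt_iff_tendsto_slope_zero.1 this).comp hu
  · refine Eventually.of_forall fun q ζ hζ => ?_
    apply Complex.norm_deriv_le_of_forall_mem_sphere_norm_le hδ0
    · apply DifferentiableOn.diffContOnCl
      apply (hdq q).mono
      intro ξ hξ
      apply hcb
      have := Metric.closure_ball_subset_closedBall hξ
      rw [Metric.mem_closedBall] at this ⊢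
      rw [Metric.mem_ball] at hζ
      linarith [dist_triangle ξ ζ ζ₀]
    · intro ξ hξ
      apply hC'
      rw [Metric.mem_sphere] at hξ
      rw [Metric.mem_closedBall]
      rw [Metric.mem_ball] at hζ
      linarith [dist_triangle ξ ζ ζ₀]
  · exact integrable_const _
  · exact Eventually.of_forall hda

lemma PerHol.mean_const (hY : IsOpen Y) (hc : Convex ℝ Y) (hh : PerHol Y h) {w₀ w₁ : d → ℂ}
    (h0 : imv w₀ ∈ Y) (h1 : imv w₁ ∈ Y) : mean h w₁ = mean h w₀ := by
  set v : d → ℝ := imv w₁ - imv w₀ with hv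
  set B : ℂ → ℂ := fun ζ => mean h (w₀ + ζ • cx v) with hB
  have hmem : ∀ t ∈ Set.Icc (0:ℝ) 1, imv (w₀ + ((t:ℂ) * I) • cx v) ∈ Y := by
    intro t ht
    have : imv (w₀ + ((t:ℂ) * I) • cx v) = imv w₀ + t • (imv w₁ - imv w₀) := by
      funext i; simp [imv, cx, hv]
    rw [this]
    exact hc.add_smul_sub_mem h0 h1 ht
  have hder : ∀ t ∈ Set.Icc (0:ℝ) 1, HasDerivAt B 0 ((t:ℂ) * I) := by
    intro t ht
    have hd := (hh.mean_hasDeriv hY w₀ (cx v) _ (hmem t ht)).hasDerivAt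
    have e0 : HasDerivAt (fun s : ℝ => (t:ℂ) * I + s) 1 0 := by
      simpa using (Complex.ofRealCLM.hasDerivAt (x := (0:ℝ))).const_add ((t:ℂ) * I)
    have e1 := HasDerivAt.scomp_of_eq (g₁ := B) (0:ℝ) hd e0 (by simp)
    have e2 : (B ∘ fun s : ℝ => (t:ℂ) * I + s) = fun _ => B ((t:ℂ) * I) := by
      funext s
      simp only [hB, Function.comp]
      rw [← hh.mean_shift (hmem t ht) (s • v)]
      congr 1
      funext i; simp [cx]; ring
    rw [e2] at e1
    have e3 := e1.unique (hasDerivAt_const (0:ℝ) (B ((t:ℂ)*I)))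
    rw [one_smul] at e3
    rw [e3] at hd
    exact hd
  have hcst : ∀ t ∈ Set.Icc (0:ℝ) 1, (fun t : ℝ => B ((t:ℂ) * I)) t = (fun t : ℝ => B ((t:ℂ) * I)) 0 := by
    have hd1 : ∀ t ∈ Set.Icc (0:ℝ) 1, HasDerivAt (fun t : ℝ => B ((t:ℂ) * I)) 0 t := by
      intro t ht
      have e0 : HasDerivAt (fun s : ℝ => (s:ℂ) * I) I t := by
        simpa using (Complex.ofRealCLM.hasDerivAt (x := t)).mul_const I
      have e1 := HasDerivAt.scomp_of_eq (g₁ := B) t (hder t ht) e0 rfl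
      simpa [Function.comp_def] using e1
    apply constant_of_has_deriv_right_zero
    · intro t ht; exact (hd1 t ht).continuousAt.continuousWithinAt
    · intro t ht; exact (hd1 t ⟨ht.1, ht.2.le⟩).hasDerivWithinAt
  have e1 := hcst 1 (by simp)
  simp only [hB] at e1
  have e2 : w₁ = cx (fun i => (w₁ i - w₀ i).re) + (w₀ + (((1:ℝ):ℂ) * I) • cx v) := by
    funext i
    apply Complex.ext <;> simp [cx, hv, imv]
  rw [e2, hh.mean_shift (hmem 1 (by simp)), e1]
  simp

lemma ee_add (x y : ℂ) : ee (x + y) = ee x * ee y := by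
  unfold ee; rw [← Complex.exp_add]; ring_nf

lemma ee_int (n : ℤ) : ee n = 1 := by
  unfold ee; rw [Complex.exp_eq_one_iff]; exact ⟨n, by ring⟩

lemma norm_ee (x : ℂ) : ‖ee x‖ = Real.exp (-(2 * Real.pi * x.im)) := by
  unfold ee; rw [Complex.norm_exp]; simp

lemma ee_ne (x : ℂ) : ee x ≠ 0 := Complex.exp_ne_zero _

lemma mF_tmk (n : d → ℤ) (x : d → ℝ) :
    UnitAddTorus.mFourier n (tmk x) = ee (∑ i, (n i : ℂ) * x i) := by
  simp only [UnitAddTorus.mFourier, tmk, ContinuousMap.coe_mk, fourier_coe_apply, ee,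
    Finset.mul_sum, Complex.exp_sum]
  congr 1; funext i; congr 1; push_cast; ring

/-- the `n`-th twisted function -/
def twf (f : (d → ℂ) → ℂ) (n : d → ℤ) (w : d → ℂ) : ℂ := f w * ee (-∑ i, (n i : ℂ) * w i)

lemma PerHol.twf (hh : PerHol Y h) (n : d → ℤ) : PerHol Y (twf h n) where
  diff := by
    apply hh.diff.mul
    unfold ee
    fun_prop
  per := by
    intro w hw k
    unfold SV.twf
    rw [hh.per w hw]
    congr 1
    have : -∑ i, (n i : ℂ) * ((w + fun i => (k i : ℂ)) i) =
       -∑ i, (n i : ℂ) * w i + ((-∑ i, n i * k i : ℤ) : ℂ) := by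
      push_cast
      simp only [Pi.add_apply, mul_add, Finset.sum_add_distrib]; ring
    rw [this, ee_add, ee_int, mul_one]

theorem PerHol.fourier (hY : IsOpen Y) (hc : Convex ℝ Y) (hh : PerHol Y h) :
    ∃ a : (d → ℤ) → ℂ, (∀ y ∈ Y, ∃ C : ℝ, ∀ n, ‖a n‖ ≤ C * Real.exp (2 * Real.pi * ∑ i, n i * y i)) ∧
      ∀ w, imv w ∈ Y → Summable (fun n => a n * ee (∑ i, (n i : ℂ) * w i)) →
        HasSum (fun n => a n * ee (∑ i, (n i : ℂ) * w i)) (h w) := by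
  rcases Y.eq_empty_or_nonempty with rfl | ⟨y0, hy0⟩
  · exact ⟨0, by simp, by simp⟩
  have him : ∀ y : d → ℝ, imv (fun i => (y i : ℂ) * I) = y := by
    intro y; funext i; simp [imv]
  set w0 : d → ℂ := fun i => (y0 i : ℂ) * I with hw0
  set a : (d → ℤ) → ℂ := fun n => mean (SV.twf h n) w0 with ha
  have hco : ∀ w, imv w ∈ Y → ∀ n, UnitAddTorus.mFourierCoeff
      (fun q : UnitAddTorus d => h (cx (rep q) + w)) n = a n * ee (∑ i, (n i : ℂ) * w i) := by
    intro w hw n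
    have e1 : a n = mean (SV.twf h n) w := (hh.twf n).mean_const hY hc hw (by rw [him]; exact hy0)
    rw [e1, mean, UnitAddTorus.mFourierCoeff, ← integral_mul_const]
    congr 1
    funext q
    conv_lhs => rw [show (UnitAddTorus.mFourier (-n)) q = (UnitAddTorus.mFourier (-n)) (tmk (rep q)) by
      rw [rep_spec]]
    rw [mF_tmk, SV.twf, smul_eq_mul, mul_assoc, ← ee_add, mul_comm]
    congr 2
    simp only [Pi.add_apply, cx, mul_add, Finset.sum_add_distrib, Pi.neg_apply]
    push_cast
    simp only [neg_mul, Finset.sum_neg_distrib]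
    ring
  refine ⟨a, ?_, ?_⟩
  · intro y hy
    have hw : imv (fun i => (y i : ℂ) * I) ∈ Y := by rw [him]; exact hy
    set g : C(UnitAddTorus d, ℂ) := ⟨_, hh.cont hw⟩ with hg
    refine ⟨‖g‖, fun n => ?_⟩
    have h1 := hco _ hw n
    have h2 : ‖UnitAddTorus.mFourierCoeff
      (fun q : UnitAddTorus d => h (cx (rep q) + fun i => (y i : ℂ) * I)) n‖ ≤ ‖g‖ := by
      unfold UnitAddTorus.mFourierCoeff
      refine (norm_integral_le_of_norm_le_const (C := ‖g‖) (Eventually.of_forall fun q => ?_)).trans ?_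
      · rw [norm_smul]
        have e1 := (UnitAddTorus.mFourier (-n)).norm_coe_le_norm q
        rw [UnitAddTorus.mFourier_norm] at e1
        have e2 := g.norm_coe_le_norm q
        calc _ ≤ 1 * ‖g‖ := by gcongr; exact e2
          _ = _ := one_mul _
      · exact (mul_le_of_le_one_right (norm_nonneg _) (measureReal_le_one (μ := volume)))
    rw [h1, norm_mul, norm_ee] at h2
    have h3 : (∑ i, (n i : ℂ) * ((y i : ℂ) * I)).im = ∑ i, n i * y i := by
      rw [Complex.im_sum]; simp
    rw [h3, Real.exp_neg, ← div_eq_mul_inv, div_le_iff₀ (Real.exp_pos _)] at h2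
    exact h2
  · intro w hw hs
    set g : C(UnitAddTorus d, ℂ) := ⟨_, hh.cont hw⟩ with hg
    have e1 : Summable (UnitAddTorus.mFourierCoeff g) := by
      refine hs.congr fun n => ?_
      exact (hco w hw n).symm
    have e2 := UnitAddTorus.hasSum_mFourier_series_apply_of_summable e1 (tmk 0)
    have e3 : g (tmk 0) = h w := by
      have := hh.rep_tmk hw 0
      simp only [hg, ContinuousMap.coe_mk, this]
      congr 1; funext i; simp [cx]
    rw [e3] at e2
    convert e2 using 1
    funext n
    rw [show UnitAddTorus.mFourierCoeff g n = _ from hco w hw n, mF_tmk]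
    simp [ee]

theorem fourier_unique (b : (d → ℤ) → ℂ) (hb : Summable b)
    (h0 : ∀ x : d → ℝ, HasSum (fun n => b n * ee (∑ i, (n i : ℂ) * x i)) 0) : b = 0 := by
  have hs : Summable (fun n => b n • UnitAddTorus.mFourier n) := by
    apply Summable.of_norm
    simp only [norm_smul, UnitAddTorus.mFourier_norm, mul_one]
    exact hb.norm
  have hz : HasSum (fun n => b n • UnitAddTorus.mFourier n) 0 := by
    convert hs.hasSum
    ext q
    have h1 := hs.hasSum.mapL (ContinuousMap.evalCLM ℂ q)
    have h2 := h0 (rep q)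
    simp only [← mF_tmk, rep_spec] at h2
    exact h2.unique h1
  have h2 := hz.mapL (ContinuousMap.toLp (E := ℂ) 2 (volume : Measure (UnitAddTorus d)) ℂ)
  funext m
  have h3 := h2.mapL (innerSL ℂ (UnitAddTorus.mFourierLp 2 m))
  have ho := UnitAddTorus.orthonormal_mFourier (d := d)
  classical
  rw [orthonormal_iff_ite] at ho
  have h4 : ∀ n, (innerSL ℂ (UnitAddTorus.mFourierLp 2 m))
      ((ContinuousMap.toLp (E := ℂ) 2 (volume : Measure (UnitAddTorus d)) ℂ) (b n • UnitAddTorus.mFourier n))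
      = if n = m then b m else 0 := by
    intro n
    rw [map_smul, map_smul]
    have := ho m n
    simp only [innerSL_apply_apply]
    rw [show (ContinuousMap.toLp (E := ℂ) 2 (volume : Measure (UnitAddTorus d)) ℂ) (UnitAddTorus.mFourier n) = UnitAddTorus.mFourierLp 2 n from rfl, this]
    by_cases hnm : n = m
    · simp [hnm]
    · rw [if_neg (fun h => hnm h.symm), if_neg hnm]; simp
  simp only [h4, map_zero] at h3
  exact (hasSum_ite_eq m (b m)).unique h3
end Mean
end SV

namespace SV
set_option linter.unusedSectionVars false

def InD (τ₁ z τ₂ : ℂ) : Prop := 0 < τ₁.im ∧ z.im ^ 2 < τ₁.im * τ₂.im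

lemma InD.im2 {τ₁ z τ₂ : ℂ} (h : InD τ₁ z τ₂) : 0 < τ₂.im := by
  by_contra hn
  push Not at hn
  nlinarith [h.1, h.2, sq_nonneg z.im, mul_nonneg h.1.le (neg_nonneg.2 hn)]

def eqv3 : (Fin 3 → ℤ) ≃ ℤ × ℤ × ℤ where
  toFun n := (n 0, n 1, n 2)
  invFun p := ![p.1, p.2.1, p.2.2]
  left_inv n := by funext i; fin_cases i <;> rfl
  right_inv p := rfl

lemma eqv3_apply (n : Fin 3 → ℤ) : eqv3 n = (n 0, n 1, n 2) := rfl
lemma eqv3_symm_apply (p : ℤ × ℤ × ℤ) : eqv3.symm p = ![p.1, p.2.1, p.2.2] := rfl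

/-- character -/
def ch (p : ℤ × ℤ × ℤ) (τ₁ z τ₂ : ℂ) : ℂ := ee (p.1 * τ₁ + p.2.1 * z + p.2.2 * τ₂)

def Ycone : Set (Fin 3 → ℝ) := {y | 0 < y 0 ∧ y 1 ^ 2 < y 0 * y 2}

lemma Ycone_open : IsOpen Ycone := by
  apply IsOpen.inter
  · exact isOpen_lt continuous_const (continuous_apply 0)
  · exact isOpen_lt ((continuous_apply (A := fun _ : Fin 3 => ℝ) 1).pow 2)
      ((continuous_apply (A := fun _ : Fin 3 => ℝ) 0).mul (continuous_apply (A := fun _ : Fin 3 => ℝ) 2))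

lemma Ycone_mem_iff (y : Fin 3 → ℝ) : y ∈ Ycone ↔ 0 < y 0 ∧ y 1 ^ 2 < y 0 * y 2 := Iff.rfl

lemma cone_ineq {a b c a' b' c' : ℝ} (h0 : 0 < a) (h1 : b^2 < a * c) (h0' : 0 < a') (h1' : b'^2 < a' * c') :
    2 * (b * b') < a * c' + a' * c := by
  have hc : 0 < c := by
    by_contra hn
    push Not at hn
    nlinarith [sq_nonneg b]
  have hc' : 0 < c' := by
    by_contra hn
    push Not at hn
    nlinarith [sq_nonneg b']
  have h2 : (b*b')^2 < (a*c') * (a'*c) := by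
    rw [mul_pow]
    calc b^2 * b'^2 ≤ b^2 * (a'*c') := by gcongr
      _ < (a*c)*(a'*c') := by
        apply mul_lt_mul_of_pos_right h1; positivity
      _ = _ := by ring
  have h3 : 0 < a * c' + a' * c := by positivity
  have h4 : (2*(b*b'))^2 < (a*c'+a'*c)^2 := by nlinarith [sq_nonneg (a*c' - a'*c)]
  exact lt_of_pow_lt_pow_left₀ 2 h3.le h4

lemma Ycone_convex : Convex ℝ Ycone := by
  rw [convex_iff_forall_pos]
  intro x hx y hy s t hs ht hst
  rw [Ycone_mem_iff] at *
  have := cone_ineq hx.1 hx.2 hy.1 hy.2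
  simp only [Pi.add_apply, Pi.smul_apply, smul_eq_mul]
  constructor
  · have := hx.1; have := hy.1; positivity
  · nlinarith [mul_pos hs ht, mul_lt_mul_of_pos_left hx.2 (mul_pos hs hs), mul_lt_mul_of_pos_left hy.2 (mul_pos ht ht),
      mul_lt_mul_of_pos_left this (mul_pos hs ht)]

lemma summable_exp_abs {c : ℝ} (hc : 0 < c) : Summable (fun n : ℤ => Real.exp (-(c * |(n:ℝ)|))) := by
  have h : Summable (fun n : ℕ => Real.exp (-(c * n))) := by
    have := Real.summable_exp_nat_mul_iff.2 (neg_lt_zero.2 hc)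
    exact this.congr fun n => by congr 1; ring
  apply Summable.of_nat_of_neg
  · simpa using h
  · simpa using h

lemma summable3 {c : ℝ} (hc : 0 < c) : Summable (fun p : ℤ × ℤ × ℤ =>
    Real.exp (-(c * |(p.1:ℝ)|)) * (Real.exp (-(c * |(p.2.1:ℝ)|)) * Real.exp (-(c * |(p.2.2:ℝ)|)))) := by
  have h := summable_exp_abs hc
  exact h.mul_of_nonneg (h.mul_of_nonneg h (fun _ => (Real.exp_pos _).le) (fun _ => (Real.exp_pos _).le))
    (fun _ => (Real.exp_pos _).le) (fun _ => by positivity)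

theorem fourier3 (f : ℂ → ℂ → ℂ → ℂ)
    (hd : DifferentiableOn ℂ (fun w : Fin 3 → ℂ => f (w 0) (w 1) (w 2)) {w | InD (w 0) (w 1) (w 2)})
    (hp : ∀ τ₁ z τ₂, InD τ₁ z τ₂ → ∀ k₁ k₂ k₃ : ℤ, f (τ₁ + k₁) (z + k₂) (τ₂ + k₃) = f τ₁ z τ₂) :
    ∃ a : ℤ × ℤ × ℤ → ℂ, ∀ τ₁ z τ₂, InD τ₁ z τ₂ → HasSum (fun p => a p * ch p τ₁ z τ₂) (f τ₁ z τ₂) := by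
  have hP : PerHol Ycone (fun w : Fin 3 → ℂ => f (w 0) (w 1) (w 2)) :=
    ⟨hd, fun w hw k => hp _ _ _ hw _ _ _⟩
  obtain ⟨a, hb, hs⟩ := hP.fourier Ycone_open Ycone_convex
  refine ⟨fun p => a (eqv3.symm p), ?_⟩
  intro τ₁ z τ₂ hD
  have hw : imv (![τ₁, z, τ₂] : Fin 3 → ℂ) ∈ Ycone := hD
  have key : Summable (fun n : Fin 3 → ℤ => a n * ee (∑ i, (n i : ℂ) * (![τ₁, z, τ₂] : Fin 3 → ℂ) i)) := by
    set y := imv (![τ₁, z, τ₂] : Fin 3 → ℂ) with hy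
    obtain ⟨ε, hε, hball⟩ := Metric.isOpen_iff.1 Ycone_open y hw
    set δ := ε / 2 with hδ
    have hδ0 : 0 < δ := by positivity
    have hsg : ∀ s : Fin 3 → Bool, (fun i => y i + (if s i then δ else -δ)) ∈ Ycone := by
      intro s
      apply hball
      rw [Metric.mem_ball, dist_pi_lt_iff hε]
      intro i
      rw [Real.dist_eq]
      split_ifs <;> simp [abs_of_pos hδ0] <;> linarith
    choose C hC using fun s => hb _ (hsg s)
    set M := ∑ s, |C s| with hM
    have hMs : ∀ s, C s ≤ M := fun s => (le_abs_self _).trans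
      (Finset.single_le_sum (f := fun s => |C s|) (fun _ _ => abs_nonneg _) (Finset.mem_univ s))
    rw [← eqv3.symm.summable_iff]
    refine Summable.of_norm_bounded ((summable3 (c := 2 * Real.pi * δ) (by positivity)).mul_left M) ?_
    intro p
    set n : Fin 3 → ℤ := eqv3.symm p with hn
    have h1 := hC (fun i => decide (n i < 0)) n
    have h2 : ∑ i, (n i : ℝ) * (y i + (if decide (n i < 0) then δ else -δ)) =
       ∑ i, (n i : ℝ) * y i - δ * ∑ i, |(n i : ℝ)| := by
      rw [Finset.mul_sum, ← Finset.sum_sub_distrib]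
      refine Finset.sum_congr rfl fun i _ => ?_
      by_cases hni : n i < 0
      · have : (n i : ℝ) < 0 := by exact_mod_cast hni
        simp [hni, abs_of_neg this]; ring
      · have : (0:ℝ) ≤ (n i : ℝ) := by push Not at hni; exact_mod_cast hni
        simp [hni, abs_of_nonneg this]; ring
    rw [h2] at h1
    simp only [Function.comp, norm_mul, norm_ee]
    have h3 : (∑ i, (n i : ℂ) * (![τ₁, z, τ₂] : Fin 3 → ℂ) i).im = ∑ i, (n i : ℝ) * y i := by
      rw [Complex.im_sum]; simp [hy, imv]
    rw [h3]
    calc _ ≤ M * Real.exp (2 * Real.pi * (∑ i, (n i : ℝ) * y i - δ * ∑ i, |(n i : ℝ)|)) *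
          Real.exp (-(2 * Real.pi * ∑ i, (n i : ℝ) * y i)) := by
          gcongr; exact h1.trans (by gcongr; exact hMs _)
      _ = M * Real.exp (-(2 * Real.pi * δ * ∑ i, |(n i : ℝ)|)) := by
          rw [mul_assoc, ← Real.exp_add]; congr 2; ring
      _ = _ := by
          rw [← Real.exp_add, ← Real.exp_add, Fin.sum_univ_three]
          congr 2
          simp [hn, eqv3_symm_apply]; ring
  have : HasSum _ (f τ₁ z τ₂) := hs _ hw key
  rw [← eqv3.symm.hasSum_iff] at this
  convert this using 1
  funext p
  simp [ch, eqv3_symm_apply, Fin.sum_univ_three]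

theorem unique3 (b : ℤ × ℤ × ℤ → ℂ)
    (h : ∀ τ₁ z τ₂, InD τ₁ z τ₂ → HasSum (fun p => b p * ch p τ₁ z τ₂) 0) : b = 0 := by
  have hI : ∀ x : Fin 3 → ℝ, InD (x 0 + I) (x 1) (x 2 + I) := by intro x; simp [InD]
  have h1 : (fun n : Fin 3 → ℤ => b (eqv3 n) * ch (eqv3 n) I 0 I) = 0 := by
    apply fourier_unique
    · have := (h _ _ _ (hI 0)).summable
      rw [← eqv3.summable_iff] at this
      simpa [Function.comp_def] using this
    · intro x
      have := h _ _ _ (hI x)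
      rw [← eqv3.hasSum_iff] at this
      convert this using 1
      funext n
      simp only [Function.comp, mul_assoc, ch, ← ee_add, eqv3_apply, Fin.sum_univ_three]
      congr 2
      simp; ring
  funext p
  have := congrFun h1 (eqv3.symm p)
  simp only [Equiv.apply_symm_apply, Pi.zero_apply, mul_eq_zero] at this
  exact this.resolve_right (ee_ne _)

theorem unique1 (b : ℤ → ℂ) (y : ℝ)
    (h : ∀ x : ℝ, HasSum (fun n : ℤ => b n * ee (n * (x + y * I))) 0) : b = 0 := by
  have h1 : (fun n : Unit → ℤ => b (n ()) * ee (n () * (y * I))) = 0 := by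
    apply fourier_unique
    · have := (h 0).summable
      rw [← (Equiv.funUnique Unit ℤ).summable_iff] at this
      simpa [Function.comp_def] using this
    · intro x
      have := h (x ())
      rw [← (Equiv.funUnique Unit ℤ).hasSum_iff] at this
      convert this using 1
      funext n
      simp only [Function.comp, mul_assoc, ← ee_add]
      congr 2
      simp; ring
  funext p
  have := congrFun h1 (fun _ => p)
  simp only [Pi.zero_apply, mul_eq_zero] at this
  exact this.resolve_right (ee_ne _)

end SV

namespace SV
set_option linter.unusedSectionVars false

def mt (τ₁ z τ₂ : ℂ) : Fin 2 → Fin 2 → ℂ := fun i j => !![τ₁, z; z, τ₂] i j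

lemma mt_of (τ₁ z τ₂ : ℂ) : Matrix.of (mt τ₁ z τ₂) = !![τ₁, z; z, τ₂] := rfl

lemma mt_mem {τ₁ z τ₂ : ℂ} (h : InD τ₁ z τ₂) : mt τ₁ z τ₂ ∈ H2 := by
  constructor
  · rw [mt_of]; ext i j; fin_cases i <;> fin_cases j <;> rfl
  · have e : (Matrix.of fun i j => (mt τ₁ z τ₂ i j).im) = !![τ₁.im, z.im; z.im, τ₂.im] := by
      ext i j; fin_cases i <;> fin_cases j <;> rfl
    rw [e]
    apply Matrix.PosDef.of_dotProduct_mulVec_pos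
    · ext i j; fin_cases i <;> fin_cases j <;> rfl
    · intro x hx
      simp only [dotProduct, Matrix.mulVec, Fin.sum_univ_two, star_trivial]
      simp
      have h0 : x 0 ≠ 0 ∨ x 1 ≠ 0 := by
        by_contra hn
        push Not at hn
        apply hx; funext i; fin_cases i <;> simp [hn]
      have h1 := h.1
      have h2 := h.2
      have key : 0 < τ₁.im * (x 0 * (τ₁.im * x 0 + z.im * x 1) + x 1 * (z.im * x 0 + τ₂.im * x 1)) := by
        have : τ₁.im * (x 0 * (τ₁.im * x 0 + z.im * x 1) + x 1 * (z.im * x 0 + τ₂.im * x 1)) =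
          (τ₁.im * x 0 + z.im * x 1)^2 + (τ₁.im * τ₂.im - z.im^2) * x 1 ^2 := by ring
        rw [this]
        by_cases hx1 : x 1 = 0
        · have hx0 : x 0 ≠ 0 := by tauto
          rw [hx1]; simp; positivity
        · have : 0 < (τ₁.im * τ₂.im - z.im^2) * x 1 ^2 := mul_pos (by linarith) (by positivity)
          positivity
      exact (pos_iff_pos_of_mul_pos key).1 h1

lemma H2_eq {τ : Fin 2 → Fin 2 → ℂ} (h : τ ∈ H2) :
    ∃ τ₁ z τ₂, InD τ₁ z τ₂ ∧ τ = mt τ₁ z τ₂ := by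
  have hs : τ 1 0 = τ 0 1 := by
    have := h.1.apply 0 1
    simpa using this
  refine ⟨τ 0 0, τ 0 1, τ 1 1, ?_, ?_⟩
  · have h1 := h.2.dotProduct_mulVec_pos (x := ![1, 0]) (by intro h; simpa using congrFun h 0)
    have h2 := h.2.det_pos
    rw [Matrix.det_fin_two] at h2
    simp [Matrix.mulVec, dotProduct] at h1 h2
    refine ⟨h1, ?_⟩
    rw [hs] at h2
    nlinarith
  · funext i j
    fin_cases i <;> fin_cases j <;> simp [mt, hs]

variable {j : ℕ} {F : (Fin 2 → Fin 2 → ℂ) → (Fin (j + 1) → ℂ)}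

abbrev IsCF (j : ℕ) (F : (Fin 2 → Fin 2 → ℂ) → (Fin (j + 1) → ℂ)) : Prop :=
  IsSiegelCuspForm j 2 Sp4Z (fun _ => 1) F

lemma blk_of (M : Matrix (Fin 4) (Fin 4) ℤ) (r s : Fin 2) (i j : Fin 2) :
   blk M r s i j = ((M ⟨2 * (r : ℕ) + (i : ℕ), by have h1 := r.isLt; have h2 := i.isLt; omega⟩
        ⟨2 * (s : ℕ) + (j : ℕ), by have h1 := s.isLt; have h2 := j.isLt; omega⟩ : ℤ) : ℂ) := rfl

lemma symCoeff_one (j : ℕ) (l i : Fin (j+1)) : symCoeff j 1 l i = if i = l then 1 else 0 := by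
  simp [symCoeff, Polynomial.coeff_X_pow, Fin.ext_iff]

lemma symAct_one (j : ℕ) (v : Fin (j+1) → ℂ) : symAct j 1 v = v := by
  funext i
  simp [symAct, symCoeff_one]

lemma moeb_eq (γ : Matrix (Fin 4) (Fin 4) ℤ) (τ : Fin 2 → Fin 2 → ℂ) (a b dd e : Matrix (Fin 2) (Fin 2) ℂ)
    (ha : blk γ 0 0 * Matrix.of τ + blk γ 0 1 = a) (hd : den γ τ = dd) (hde : dd * e = 1) (hb : a * e = b) :
    moeb γ τ = fun i j => b i j := by
  unfold moeb
  rw [ha, hd, Matrix.inv_eq_right_inv hde, hb]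

theorem CF_transl (hF : IsCF j F) (τ₁ z τ₂ : ℂ) (h : InD τ₁ z τ₂) (k₁ k₂ k₃ : ℤ) :
    F (mt (τ₁ + k₁) (z + k₂) (τ₂ + k₃)) = F (mt τ₁ z τ₂) := by
  set γ : Matrix (Fin 4) (Fin 4) ℤ := !![1,0,k₁,k₂; 0,1,k₂,k₃; 0,0,1,0; 0,0,0,1] with hγ
  have hm : γ ∈ Sp4Z := by
    show γᵀ * J4 * γ = J4
    ext i j
    fin_cases i <;> fin_cases j <;>
      simp [hγ, J4, Matrix.mul_apply, Fin.sum_univ_four]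
  have hd : den γ (mt τ₁ z τ₂) = 1 := by
    unfold den
    rw [mt_of]
    ext i j
    fin_cases i <;> fin_cases j <;>
      simp [hγ, blk_of, Matrix.mul_apply, Fin.sum_univ_two]
  have h1 := hF.2.1 γ hm _ (mt_mem h)
  rw [moeb_eq γ _ !![τ₁+k₁, z+k₂; z+k₂, τ₂+k₃] !![τ₁+k₁, z+k₂; z+k₂, τ₂+k₃] 1 1 ?_ hd (by simp) (by simp)] at h1
  · rw [hd, wt, symAct_one] at h1
    rw [Matrix.det_one, _root_.one_zpow, one_smul, one_smul] at h1
    exact h1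
  · rw [mt_of]
    ext i j
    fin_cases i <;> fin_cases j <;>
      simp [hγ, blk_of, Matrix.mul_apply, Fin.sum_univ_two]

theorem CF_U (hF : IsCF j F) (τ₁ z τ₂ : ℂ) (h : InD τ₁ z τ₂) (p q r s d : ℤ) (hd : p * s - q * r = d)
    (hdd : d * d = 1) :
    F (mt (p^2 * τ₁ + 2 * p * q * z + q^2 * τ₂) (p * r * τ₁ + (p*s+q*r) * z + q * s * τ₂)
      (r^2 * τ₁ + 2 * r * s * z + s^2 * τ₂)) = symAct j !![(d*s : ℂ), -(d*r); -(d*q), d*p] (F (mt τ₁ z τ₂)) := by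
  set γ : Matrix (Fin 4) (Fin 4) ℤ := !![p,q,0,0; r,s,0,0; 0,0,d*s,-(d*r); 0,0,-(d*q),d*p] with hγ
  have e1 : d * (p * s - q * r) = 1 := by rw [hd, hdd]
  have hm : γ ∈ Sp4Z := by
    show γᵀ * J4 * γ = J4
    ext i j
    fin_cases i <;> fin_cases j <;>
      simp [hγ, J4, Matrix.mul_apply, Fin.sum_univ_four] <;> linarith
  have e2 : (d:ℂ) * (p * s - q * r) = 1 := by exact_mod_cast e1
  have hden : den γ (mt τ₁ z τ₂) = !![(d*s : ℂ), -(d*r); -(d*q), d*p] := by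
    unfold den
    rw [mt_of]
    ext i j
    fin_cases i <;> fin_cases j <;>
      simp [hγ, blk_of, Matrix.mul_apply, Fin.sum_univ_two]
  have h1 := hF.2.1 γ hm _ (mt_mem h)
  rw [moeb_eq γ _ !![p*τ₁+q*z, p*z+q*τ₂; r*τ₁+s*z, r*z+s*τ₂]
      !![(p^2 * τ₁ + 2 * p * q * z + q^2 * τ₂), (p * r * τ₁ + (p*s+q*r) * z + q * s * τ₂);
      (p * r * τ₁ + (p*s+q*r) * z + q * s * τ₂), (r^2 * τ₁ + 2 * r * s * z + s^2 * τ₂)] _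
      !![(p:ℂ), r; q, s] ?_ hden ?_ ?_] at h1
  · rw [hden, wt] at h1
    have hdet : (!![(d*s : ℂ), -(d*r); -(d*q), d*p]).det ^ (2:ℤ) = 1 := by
      rw [Matrix.det_fin_two]
      have : (d:ℂ)*s*(d*p) - -(d*r) * -(d*q) = d := by linear_combination (d:ℂ) * e2
      simp only [Matrix.of_apply, Matrix.cons_val', Matrix.cons_val_zero, Matrix.cons_val_one, Matrix.cons_val_fin_one]
      rw [this]
      have e3 : (d:ℂ)*d = 1 := by exact_mod_cast hdd
      rw [zpow_ofNat, sq, e3]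
    rw [hdet, one_smul, one_smul] at h1
    exact h1
  · rw [mt_of]
    ext i j
    fin_cases i <;> fin_cases j <;>
      simp [hγ, blk_of, Matrix.mul_apply, Fin.sum_univ_two]
  · ext i j
    fin_cases i <;> fin_cases j <;>
      simp [Matrix.mul_apply, Fin.sum_univ_two] <;> first | linear_combination e2 | ring
  · ext i j
    fin_cases i <;> fin_cases j <;>
      simp [Matrix.mul_apply, Fin.sum_univ_two] <;> ring

theorem CF_J (hF : IsCF j F) (τ₁ z τ₂ : ℂ) (h : InD τ₁ z τ₂) :
    F (mt (-1/τ₁) (z/τ₁) (τ₂ - z^2/τ₁)) = τ₁^2 • symAct j !![τ₁, z; 0, 1] (F (mt τ₁ z τ₂)) := by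
  have hτ : τ₁ ≠ 0 := by rintro rfl; exact lt_irrefl _ h.1
  set γ : Matrix (Fin 4) (Fin 4) ℤ := !![0,0,-1,0; 0,1,0,0; 1,0,0,0; 0,0,0,1] with hγ
  have hm : γ ∈ Sp4Z := by
    show γᵀ * J4 * γ = J4
    ext i j
    fin_cases i <;> fin_cases j <;>
      simp [hγ, J4, Matrix.mul_apply, Fin.sum_univ_four]
  have hden : den γ (mt τ₁ z τ₂) = !![τ₁, z; 0, 1] := by
    unfold den
    rw [mt_of]
    ext i j
    fin_cases i <;> fin_cases j <;>
      simp [hγ, blk_of, Matrix.mul_apply, Fin.sum_univ_two]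
  have h1 := hF.2.1 γ hm _ (mt_mem h)
  rw [moeb_eq γ _ !![-1, 0; z, τ₂] !![-1/τ₁, z/τ₁; z/τ₁, τ₂ - z^2/τ₁] _
      !![1/τ₁, -z/τ₁; 0, 1] ?_ hden ?_ ?_] at h1
  · rw [hden, wt] at h1
    have hdet : (!![τ₁, z; 0, 1]).det ^ (2:ℤ) = τ₁^2 := by
      rw [Matrix.det_fin_two]; simp
    rw [hdet, one_smul] at h1
    exact h1
  · rw [mt_of]
    ext i j
    fin_cases i <;> fin_cases j <;>
      simp [hγ, blk_of, Matrix.mul_apply, Fin.sum_univ_two]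
  · ext i j
    fin_cases i <;> fin_cases j <;>
      simp [Matrix.mul_apply, Fin.sum_univ_two] <;> field_simp <;> ring
  · ext i j
    fin_cases i <;> fin_cases j <;>
      simp [Matrix.mul_apply, Fin.sum_univ_two] <;> field_simp <;> ring

theorem CF_fourier (hF : IsCF j F) : ∃ a : ℤ → ℤ → ℤ → Fin (j+1) → ℂ, ∀ τ₁ z τ₂, InD τ₁ z τ₂ → ∀ l,
    HasSum (fun p : ℤ × ℤ × ℤ => a p.1 p.2.1 p.2.2 l * ch p τ₁ z τ₂) (F (mt τ₁ z τ₂) l) := by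
  have : ∀ l : Fin (j+1), ∃ a : ℤ × ℤ × ℤ → ℂ, ∀ τ₁ z τ₂, InD τ₁ z τ₂ →
      HasSum (fun p => a p * ch p τ₁ z τ₂) (F (mt τ₁ z τ₂) l) := by
    intro l
    apply fourier3 (fun τ₁ z τ₂ => F (mt τ₁ z τ₂) l)
    · have h1 : DifferentiableOn ℂ (fun w : Fin 3 → ℂ => F (mt (w 0) (w 1) (w 2)))
        {w | InD (w 0) (w 1) (w 2)} := by
        refine hF.1.comp (g := F) (f := fun w : Fin 3 → ℂ => mt (w 0) (w 1) (w 2)) ?_ ?_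
        · apply Differentiable.differentiableOn
          rw [differentiable_pi]; intro i
          rw [differentiable_pi]; intro k
          fin_cases i <;> fin_cases k <;> simp [mt] <;> fun_prop
        · intro w hw
          exact mt_mem hw
      exact (differentiableOn_pi.1 h1) l
    · intro τ₁ z τ₂ h k₁ k₂ k₃
      exact congrFun (CF_transl hF τ₁ z τ₂ h k₁ k₂ k₃) l
  choose a ha using this
  exact ⟨fun n r m l => a l (n, r, m), fun τ₁ z τ₂ h l => ha l τ₁ z τ₂ h⟩

end SV

namespace SV
set_option linter.unusedSectionVars false

variable {j : ℕ} {F : (Fin 2 → Fin 2 → ℂ) → (Fin (j + 1) → ℂ)}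
  {a : ℤ → ℤ → ℤ → Fin (j+1) → ℂ}

/-- Fourier coefficient relation -/
def HasFE (F : (Fin 2 → Fin 2 → ℂ) → (Fin (j + 1) → ℂ)) (a : ℤ → ℤ → ℤ → Fin (j+1) → ℂ) : Prop :=
  ∀ τ₁ z τ₂, InD τ₁ z τ₂ → ∀ l,
    HasSum (fun p : ℤ × ℤ × ℤ => a p.1 p.2.1 p.2.2 l * ch p τ₁ z τ₂) (F (mt τ₁ z τ₂) l)

lemma _root_.HasSum.congr_fun_eq {ι : Type*} {f g : ι → ℂ} {s : ℂ} (h : HasSum f s) (e : ∀ i, g i = f i) :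
    HasSum g s := by
  have : g = f := funext e
  rw [this]; exact h

/-- substitution into a quadratic form -/
def act3 (p q r s : ℤ) (T : ℤ × ℤ × ℤ) : ℤ × ℤ × ℤ :=
  (T.1 * p^2 + T.2.1 * (p * r) + T.2.2 * r^2, 2 * T.1 * (p * q) + T.2.1 * (p*s+q*r) + 2 * T.2.2 * (r * s),
    T.1 * q^2 + T.2.1 * (q * s) + T.2.2 * s^2)

lemma act3_act3 (p q r s p' q' r' s' : ℤ) (T : ℤ × ℤ × ℤ) :
    act3 p' q' r' s' (act3 p q r s T) = act3 (p*p'+q*r') (p*q'+q*s') (r*p'+s*r') (r*q'+s*s') T := by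
  simp only [act3, Prod.mk.injEq]
  refine ⟨by ring, by ring, by ring⟩

lemma act3_one (T : ℤ × ℤ × ℤ) : act3 1 0 0 1 T = T := by
  simp [act3]

def act3E (p q r s d : ℤ) (hd : p * s - q * r = d) (hdd : d * d = 1) : ℤ × ℤ × ℤ ≃ ℤ × ℤ × ℤ where
  toFun := act3 p q r s
  invFun := act3 (d*s) (-(d*q)) (-(d*r)) (d*p)
  left_inv T := by
    have e1 : d * (p * s - q * r) = 1 := by rw [hd, hdd]
    rw [act3_act3]
    convert act3_one T using 2 <;> first | linarith | ring
  right_inv T := by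
    have e1 : d * (p * s - q * r) = 1 := by rw [hd, hdd]
    rw [act3_act3]
    convert act3_one T using 2 <;> first | linarith | ring

lemma InD_act {τ₁ z τ₂ : ℂ} (h : InD τ₁ z τ₂) (p q r s d : ℤ) (hd : p * s - q * r = d) (hdd : d * d = 1) :
    InD (p^2 * τ₁ + 2 * p * q * z + q^2 * τ₂) (p * r * τ₁ + (p*s+q*r) * z + q * s * τ₂)
      (r^2 * τ₁ + 2 * r * s * z + s^2 * τ₂) := by
  have i1 : (p^2 * τ₁ + 2 * p * q * z + q^2 * τ₂).im = p^2 * τ₁.im + 2 * p * q * z.im + q^2 * τ₂.im := by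
    simp [← Complex.ofReal_intCast, ← Complex.ofReal_pow]
  have i2 : (p * r * τ₁ + (p*s+q*r) * z + q * s * τ₂).im = p * r * τ₁.im + (p*s+q*r) * z.im + q * s * τ₂.im := by
    simp [← Complex.ofReal_intCast]
  have i3 : (r^2 * τ₁ + 2 * r * s * z + s^2 * τ₂).im = r^2 * τ₁.im + 2 * r * s * z.im + s^2 * τ₂.im := by
    simp [← Complex.ofReal_intCast, ← Complex.ofReal_pow]
  have h1 := h.1
  have h2 := h.2
  unfold InD
  rw [i1, i2, i3]
  constructor
  · have key : 0 < τ₁.im * (p^2 * τ₁.im + 2 * p * q * z.im + q^2 * τ₂.im) := by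
      have : τ₁.im * (p^2 * τ₁.im + 2 * p * q * z.im + q^2 * τ₂.im) =
        (p * τ₁.im + q * z.im)^2 + (τ₁.im * τ₂.im - z.im^2) * q^2 := by ring
      rw [this]
      by_cases hq : q = 0
      · have hp : p ≠ 0 := by rintro rfl; subst hq; simp at hd; subst hd; simp at hdd
        have : (p:ℝ) ≠ 0 := by exact_mod_cast hp
        rw [hq]; simp; positivity
      · have hq' : (q:ℝ) ≠ 0 := by exact_mod_cast hq
        have : 0 < (τ₁.im * τ₂.im - z.im^2) * (q:ℝ) ^2 := mul_pos (by linarith) (by positivity)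
        positivity
    exact (pos_iff_pos_of_mul_pos key).1 h1
  · have e : ((p:ℝ)*s - q*r)^2 = 1 := by
      have : (p*s-q*r)^2 = 1 := by rw [hd, sq, hdd]
      exact_mod_cast this
    nlinarith

lemma ch_act (p q r s : ℤ) (T : ℤ × ℤ × ℤ) (τ₁ z τ₂ : ℂ) :
    ch T (p^2 * τ₁ + 2 * p * q * z + q^2 * τ₂) (p * r * τ₁ + (p*s+q*r) * z + q * s * τ₂)
      (r^2 * τ₁ + 2 * r * s * z + s^2 * τ₂) = ch (act3 p q r s T) τ₁ z τ₂ := by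
  unfold ch act3
  congr 1
  push_cast
  ring

lemma coef_U (hF : IsCF j F) (ha : HasFE F a) (p q r s d : ℤ) (hd : p * s - q * r = d) (hdd : d * d = 1)
    (n ρ m : ℤ) : a n ρ m = symAct j !![(d*s : ℂ), -(d*r); -(d*q), d*p]
      (a (n * p^2 + ρ * (p * r) + m * r^2) (2 * n * (p * q) + ρ * (p*s+q*r) + 2 * m * (r * s))
        (n * q^2 + ρ * (q * s) + m * s^2)) := by
  set M := !![(d*s : ℂ), -(d*r); -(d*q), d*p] with hM
  set E := act3E p q r s d hd hdd with hE
  funext i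
  have key : (fun T : ℤ × ℤ × ℤ => (fun T : ℤ × ℤ × ℤ => a T.1 T.2.1 T.2.2 i) (E.symm T) -
      ∑ l, symCoeff j M l i * a T.1 T.2.1 T.2.2 l) = 0 := by
    apply unique3
    intro τ₁ z τ₂ h
    have h1 := ha _ _ _ (InD_act h p q r s d hd hdd) i
    rw [CF_U hF τ₁ z τ₂ h p q r s d hd hdd] at h1
    have h2 : HasSum (fun T : ℤ × ℤ × ℤ => ∑ l, symCoeff j M l i * (a T.1 T.2.1 T.2.2 l * ch T τ₁ z τ₂))
      (∑ l, symCoeff j M l i * F (mt τ₁ z τ₂) l) :=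
      hasSum_sum fun l _ => (ha τ₁ z τ₂ h l).mul_left _
    rw [← E.symm.hasSum_iff] at h1
    have h3 := h1.sub h2
    have e0 : symAct j M (F (mt τ₁ z τ₂)) i = ∑ l, symCoeff j M l i * F (mt τ₁ z τ₂) l := rfl
    rw [e0, sub_self] at h3
    refine HasSum.congr_fun_eq h3 ?_
    intro T
    simp only [Function.comp, ch_act]
    have : act3 p q r s (E.symm T) = T := E.apply_symm_apply T
    rw [this, sub_mul, Finset.sum_mul]
    congr 1
    exact Finset.sum_congr rfl fun l _ => by ring
  have := congrFun key (E (n, ρ, m))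
  simp only [Equiv.symm_apply_apply, Pi.zero_apply] at this
  rw [sub_eq_zero] at this
  exact this

lemma coef_bound (ha : HasFE F a) : ∃ C : ℝ, 0 ≤ C ∧ ∀ n r m : ℤ, ∀ l,
    ‖a n r m l‖ ≤ C * Real.exp (2 * Real.pi * (n + m)) := by
  have h0 : InD I 0 I := by simp [InD]
  have : ∀ l, ∃ C : ℝ, 0 ≤ C ∧ ∀ n r m : ℤ, ‖a n r m l‖ ≤ C * Real.exp (2 * Real.pi * (n + m)) := by
    intro l
    have hs := (ha I 0 I h0 l).summable.norm
    refine ⟨∑' p : ℤ × ℤ × ℤ, ‖a p.1 p.2.1 p.2.2 l * ch p I 0 I‖, tsum_nonneg fun _ => norm_nonneg _, ?_⟩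
    intro n r m
    have h1 := hs.le_tsum (n, r, m) (fun _ _ => norm_nonneg _)
    simp only [norm_mul] at h1
    have h2 : ‖ch (n, r, m) I 0 I‖ = (Real.exp (2 * Real.pi * (n + m)))⁻¹ := by
      rw [ch, norm_ee, Real.exp_neg]; simp
    rw [h2, ← div_eq_mul_inv, div_le_iff₀ (Real.exp_pos _)] at h1
    simpa only [norm_mul] using h1
  choose C hC0 hC using this
  refine ⟨∑ l, C l, Finset.sum_nonneg fun l _ => hC0 l, ?_⟩
  intro n r m l
  refine (hC l n r m).trans ?_
  gcongr
  exact Finset.single_le_sum (fun l _ => hC0 l) (Finset.mem_univ l)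

lemma symCoeff_shear (j : ℕ) (x : ℂ) (l i : Fin (j+1)) :
    ‖symCoeff j !![1, x; 0, 1] l i‖ ≤ (1 + ‖x‖)^j * 2^j := by
  have : symCoeff j !![1, x; 0, 1] l i = ((Polynomial.X + Polynomial.C x)^(l:ℕ)).coeff i := by
    simp [symCoeff, add_comm]
  rw [this, Polynomial.coeff_X_add_C_pow, norm_mul, norm_pow]
  have hl : (l:ℕ) ≤ j := Nat.lt_succ_iff.1 l.2
  have h1 : ‖x‖ ^ ((l:ℕ) - i) ≤ (1 + ‖x‖)^j := by
    calc ‖x‖ ^ ((l:ℕ) - i) ≤ (1+‖x‖) ^ ((l:ℕ) - i) := by gcongr; linarith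
      _ ≤ _ := pow_le_pow_right₀ (by linarith [norm_nonneg x]) (by omega)
  have h2 : ‖(((l:ℕ).choose i : ℕ) : ℂ)‖ ≤ 2^j := by
    rw [Complex.norm_natCast]
    calc (((l:ℕ).choose i : ℕ) : ℝ) ≤ ((2^(l:ℕ) : ℕ) : ℝ) := by exact_mod_cast Nat.choose_le_two_pow _ _
      _ = 2^(l:ℕ) := by norm_cast
      _ ≤ _ := pow_le_pow_right₀ (by norm_num) hl
  gcongr

lemma coef_supp1 (hF : IsCF j F) (ha : HasFE F a) (n ρ m : ℤ) (h : m < 0 ∨ (m = 0 ∧ ρ ≠ 0)) :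
    a n ρ m = 0 := by
  obtain ⟨C, hC0, hC⟩ := coef_bound ha
  obtain ⟨σ, hσ, hσ2⟩ : ∃ σ : ℤ, σ * σ = 1 ∧ ρ * σ = -|ρ| := by
    rcases le_total 0 ρ with h | h
    · exact ⟨-1, by norm_num, by rw [abs_of_nonneg h]; ring⟩
    · exact ⟨1, by norm_num, by rw [abs_of_nonpos h]; ring⟩
  have hexp : ∀ k : ℕ, ρ * (σ * k) + m * (σ*k)^2 ≤ -(k:ℤ) := by
    intro k
    have e : ρ * (σ * k) + m * (σ*k)^2 = -|ρ| * k + m * k^2 := by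
      linear_combination (k:ℤ) * hσ2 + m * k^2 * hσ
    rw [e]
    have hk : (0:ℤ) ≤ k := by positivity
    rcases h with h | ⟨h, h'⟩
    · have h1 := abs_nonneg ρ
      have h3 : (k:ℤ) ≤ k^2 := by
        rcases hk.eq_or_lt with h | h
        · rw [← h]; norm_num
        · nlinarith
      have h4 : m * (k:ℤ)^2 ≤ -1 * (k:ℤ)^2 := by gcongr; omega
      have h5 : 0 ≤ |ρ| * k := by positivity
      linarith
    · rw [h]
      have := abs_pos.2 h'
      nlinarith
  funext i
  have hb : ∀ k : ℕ, ‖a n ρ m i‖ ≤ ((j+1) * 2^j * C * Real.exp (2*Real.pi*(n+m))) *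
      ((1 + (k:ℝ))^j * Real.exp (-(2*Real.pi) * k)) := by
    intro k
    have hU := coef_U hF ha 1 0 (σ * k) 1 1 (by ring) (by norm_num) n ρ m
    rw [hU]
    have hMe : !![((1:ℤ)*(1:ℤ) : ℂ), -((1:ℤ)*((σ*k : ℤ):ℂ)); -((1:ℤ)*(0:ℤ)), (1:ℤ)*(1:ℤ)] = !![1, (-((σ*k:ℤ):ℂ)); 0, 1] := by
      simp
    rw [hMe]
    have hσn : ‖(-((σ*k:ℤ):ℂ))‖ = k := by
      have : |σ| = 1 := by
        have h1 : |σ| * |σ| = 1 := by rw [← abs_mul, hσ]; norm_num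
        nlinarith [abs_nonneg σ]
      rw [norm_neg, Complex.norm_intCast, ← Int.cast_abs, abs_mul, this]
      simp
    refine (norm_sum_le _ _).trans ?_
    have : ∀ l ∈ Finset.univ, ‖symCoeff j !![1, (-((σ*k:ℤ):ℂ)); 0, 1] l i *
       a (n * 1^2 + ρ * (1 * (σ*k)) + m * (σ*k)^2) (2 * n * (1 * 0) + ρ * (1*1+0*(σ*k)) + 2 * m * ((σ*k) * 1))
        (n * 0^2 + ρ * (0 * 1) + m * 1^2) l‖ ≤ ((1+(k:ℝ))^j * 2^j) * (C * Real.exp (2*Real.pi * (n + m - k))) := by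
      intro l _
      rw [norm_mul]
      have h1 := symCoeff_shear j (-((σ*k:ℤ):ℂ)) l i
      rw [hσn] at h1
      refine mul_le_mul h1 ((hC _ _ _ l).trans ?_) (norm_nonneg _) (by positivity)
      gcongr
      have := hexp k
      have h2 : ((ρ * (σ * k) + m * (σ*k)^2 : ℤ) : ℝ) ≤ ((-(k:ℤ) : ℤ):ℝ) := by exact_mod_cast this
      push_cast at h2 ⊢
      linarith
    refine (Finset.sum_le_sum this).trans (le_of_eq ?_)
    rw [Finset.sum_const, Finset.card_univ, Fintype.card_fin, nsmul_eq_mul]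
    rw [show 2*Real.pi * ((n:ℝ) + m - k) = 2*Real.pi * (n+m) + -(2*Real.pi) * k by ring, Real.exp_add]
    push_cast; ring
  have hlim : Tendsto (fun k : ℕ => ((j+1) * 2^j * C * Real.exp (2*Real.pi*(n+m))) *
      ((1 + (k:ℝ))^j * Real.exp (-(2*Real.pi) * k))) atTop (𝓝 0) := by
    rw [← mul_zero ((j+1) * 2^j * C * Real.exp (2*Real.pi*(n+m)))]
    apply Tendsto.const_mul
    have h1 : Tendsto (fun x : ℝ => x^j * Real.exp (-(2*Real.pi) * x)) atTop (𝓝 0) := by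
      refine squeeze_zero' ?_ ?_ (Real.tendsto_pow_mul_exp_neg_atTop_nhds_zero j)
      · filter_upwards [eventually_ge_atTop 0] with x hx
        positivity
      · filter_upwards [eventually_ge_atTop 0] with x hx
        gcongr
        nlinarith [Real.pi_gt_three]
    have h2 : Tendsto (fun k : ℕ => ((1:ℝ) + k)) atTop atTop :=
      tendsto_atTop_add_const_left _ _ tendsto_natCast_atTop_atTop
    have h3 := ((h1.comp h2).mul_const (Real.exp (2*Real.pi)))
    rw [zero_mul] at h3
    refine h3.congr fun k => ?_
    simp only [Function.comp]
    rw [mul_assoc, ← Real.exp_add]; congr 2; ring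
  have := ge_of_tendsto' hlim hb
  exact norm_le_zero_iff.1 this

lemma coef_supp2 (hF : IsCF j F) (ha : HasFE F a) (n : ℤ) : a n 0 0 = 0 := by
  funext l
  have h1 := fun p : ℤ × ℤ × ℤ => coef_supp1 hF ha p.1 p.2.1 p.2.2
  have hlim : ∀ τ₁ : ℂ, 0 < τ₁.im → Tendsto (fun t : ℝ => F (mt τ₁ 0 (t * I)) l) atTop (𝓝 0) := by
    intro τ₁ hτ
    have h2 := hF.2.2.1 1 (by simp [Sp4Z]) τ₁ hτ
    have h3 := (tendsto_pi_nhds.1 h2) l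
    refine h3.congr fun t => ?_
    have e1 : diagH τ₁ (t * I) = mt τ₁ 0 (t * I) := by
      funext i k; fin_cases i <;> fin_cases k <;> simp [diagH, mt]
    have hb0 : blk 1 0 0 = 1 := by ext i k; fin_cases i <;> fin_cases k <;> simp [blk_of]
    have hb1 : blk 1 0 1 = 0 := by ext i k; fin_cases i <;> fin_cases k <;> simp [blk_of]
    have hb2 : blk 1 1 0 = 0 := by ext i k; fin_cases i <;> fin_cases k <;> simp [blk_of]
    have hb3 : blk 1 1 1 = 1 := by ext i k; fin_cases i <;> fin_cases k <;> simp [blk_of]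
    have hden : ∀ τ, den 1 τ = 1 := by intro τ; rw [den, hb2, hb3]; simp
    have hmo : ∀ τ, moeb 1 τ = τ := by
      intro τ
      rw [moeb_eq 1 τ (Matrix.of τ) (Matrix.of τ) 1 1 (by rw [hb0, hb1]; simp) (hden τ) (by simp) (by simp)]
      rfl
    rw [slashS, hden, hmo, inv_one, symAct_one, e1]
    simp
  have key : ∀ τ₁ : ℂ, 0 < τ₁.im → HasSum (fun n : ℤ => a n 0 0 l * ee (n * τ₁)) 0 := by
    intro τ₁ hτ
    have hD : ∀ t : ℝ, 0 < t → InD τ₁ 0 (t * I) := by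
      intro t ht; refine ⟨hτ, ?_⟩; simp; positivity
    have hs := (ha _ _ _ (hD 1 one_pos) l).summable.norm
    have hT := tendsto_tsum_of_dominated_convergence (𝓕 := atTop)
      (f := fun (t : ℝ) (p : ℤ × ℤ × ℤ) => a p.1 p.2.1 p.2.2 l * ch p τ₁ 0 (t * I))
      (g := fun p => if p.2.1 = 0 ∧ p.2.2 = 0 then a p.1 0 0 l * ee (p.1 * τ₁) else 0) hs ?_ ?_
    · have h5 : Tendsto (fun t : ℝ => ∑' p : ℤ × ℤ × ℤ, a p.1 p.2.1 p.2.2 l * ch p τ₁ 0 (t * I)) atTop (𝓝 0) := by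
        refine (hlim τ₁ hτ).congr' ?_
        filter_upwards [eventually_gt_atTop 0] with t ht
        exact (ha _ _ _ (hD t ht) l).tsum_eq.symm
      have h6 := tendsto_nhds_unique hT h5
      have hinj : Function.Injective (fun n : ℤ => ((n, 0, 0) : ℤ × ℤ × ℤ)) := by
        intro x y h; simpa using h
      have hsum : Summable (fun n : ℤ => a n 0 0 l * ee (n * τ₁)) := by
        have := (ha _ _ _ (hD 1 one_pos) l).summable.comp_injective hinj
        simpa [Function.comp_def, ch] using this
      have h7 := hsum.hasSum
      convert h7
      rw [← h6, ← hinj.tsum_eq]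
      · refine tsum_congr fun n => by simp
      · intro p hp
        simp only [Function.mem_support, ne_eq, ite_eq_right_iff, not_forall] at hp
        obtain ⟨hp, -⟩ := hp
        exact ⟨p.1, by ext <;> simp [hp.1, hp.2]⟩
    · intro p
      by_cases hp : p.2.1 = 0 ∧ p.2.2 = 0
      · rw [if_pos hp]
        have : (fun t : ℝ => a p.1 p.2.1 p.2.2 l * ch p τ₁ 0 (t * I)) = fun _ => a p.1 0 0 l * ee (p.1 * τ₁) := by
          funext t; simp [ch, hp.1, hp.2]
        rw [this]; exact tendsto_const_nhds
      · rw [if_neg hp]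
        by_cases hm : p.2.2 < 0 ∨ (p.2.2 = 0 ∧ p.2.1 ≠ 0)
        · rw [h1 p hm]; simp
        · have hm0 : 0 < p.2.2 := by
            push Not at hm
            rcases hm with ⟨hm1, hm2⟩
            rcases hm1.eq_or_lt with h | h
            · exact absurd ⟨hm2 h.symm, h.symm⟩ hp
            · exact h
          rw [tendsto_zero_iff_norm_tendsto_zero]
          have hm0' : (0:ℝ) < p.2.2 := by exact_mod_cast hm0
          have h8 : Tendsto (fun t : ℝ => Real.exp (-(2*Real.pi*p.2.2) * t)) atTop (𝓝 0) := by
            apply Real.tendsto_exp_atBot.comp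
            apply Tendsto.const_mul_atTop_of_neg _ tendsto_id
            have := Real.pi_pos
            have : 0 < 2 * Real.pi * p.2.2 := by positivity
            linarith
          have h9 := h8.const_mul (‖a p.1 p.2.1 p.2.2 l‖ * Real.exp (-(2*Real.pi * (p.1 * τ₁.im))))
          rw [mul_zero] at h9
          refine h9.congr fun t => ?_
          rw [norm_mul, ch, norm_ee, mul_assoc, ← Real.exp_add]
          congr 2; simp; ring
    · filter_upwards [eventually_ge_atTop 1] with t ht p
      rw [norm_mul, norm_mul]
      by_cases hm : p.2.2 < 0
      · rw [h1 p (Or.inl hm)]; simp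
      · have hm' : (0:ℝ) ≤ p.2.2 := by push Not at hm; exact_mod_cast hm
        gcongr
        rw [ch, ch, norm_ee, norm_ee]
        gcongr 1
        have := Real.pi_pos
        simp
        have : (p.2.2:ℝ) ≤ p.2.2 * t := by nlinarith
        gcongr
  have h10 : (fun n : ℤ => a n 0 0 l) = 0 := by
    apply unique1 _ 1
    intro x
    exact key (x + (1:ℝ) * I) (by simp)
  exact congrFun h10 n

lemma coef_supp (hF : IsCF j F) (ha : HasFE F a) (n ρ m : ℤ) (h : a n ρ m ≠ 0) :
    1 ≤ n ∧ 1 ≤ m ∧ ρ^2 < 4 * n * m := by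
  have hm : ∀ n ρ m : ℤ, m ≤ 0 → a n ρ m = 0 := by
    intro n ρ m hm
    by_cases h1 : m < 0 ∨ (m = 0 ∧ ρ ≠ 0)
    · exact coef_supp1 hF ha n ρ m h1
    · push Not at h1
      have hm0 : m = 0 := le_antisymm hm h1.1
      rw [hm0, h1.2 hm0]
      exact coef_supp2 hF ha n
  have hv : ∀ q s : ℤ, IsCoprime q s → 0 < n * q^2 + ρ * (q * s) + m * s^2 := by
    intro q s hqs
    by_contra hle
    push Not at hle
    obtain ⟨u, v, huv⟩ := hqs
    apply h
    rw [coef_U hF ha v q (-u) s 1 (by linarith) (by norm_num) n ρ m, hm _ _ _ hle, symAct_zero]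
  have hn : 1 ≤ n := by have := hv 1 0 isCoprime_one_left; simp at this; omega
  have hm1 : 1 ≤ m := by have := hv 0 1 isCoprime_one_right; simp at this; omega
  refine ⟨hn, hm1, ?_⟩
  have hg : Int.gcd (-ρ) (2*n) ≠ 0 := by rw [Ne, Int.gcd_eq_zero_iff]; omega
  obtain ⟨g, hgd⟩ : ∃ g : ℤ, g = Int.gcd (-ρ) (2*n) := ⟨_, rfl⟩
  have hg0 : 0 < g := by rw [hgd]; exact_mod_cast Nat.pos_of_ne_zero hg
  obtain ⟨x, hx⟩ : g ∣ -ρ := by rw [hgd]; exact Int.gcd_dvd_left ..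
  obtain ⟨y, hy⟩ : g ∣ 2*n := by rw [hgd]; exact Int.gcd_dvd_right ..
  have hcop : IsCoprime x y := by
    have h1 := Int.isCoprime_iff_gcd_eq_one.2 (Int.gcd_ediv_gcd_ediv_gcd (i := -ρ) (j := 2*n) (Nat.pos_of_ne_zero hg))
    rw [← hgd, hx, hy, Int.mul_ediv_cancel_left _ hg0.ne', Int.mul_ediv_cancel_left _ hg0.ne'] at h1
    exact h1
  have h2 := hv x y hcop
  have h3 : g^2 * (n * x^2 + ρ * (x*y) + m * y^2) = n * (4*n*m - ρ^2) := by
    have hx' : ρ = -(g*x) := by linarith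
    have : g^2 * (n * x^2 + ρ * (x*y) + m * y^2) = n * (g*x)^2 + ρ * ((g*x)*(g*y)) + m*(g*y)^2 := by ring
    rw [this, ← hx, ← hy]; ring
  have h4 : 0 < n * (4*n*m - ρ^2) := by rw [← h3]; positivity
  have := (pos_iff_pos_of_mul_pos h4).1 (by omega)
  linarith

end SV

namespace SV
set_option linter.unusedSectionVars false

variable {j : ℕ} {F : (Fin 2 → Fin 2 → ℂ) → (Fin (j + 1) → ℂ)}
  {a : ℤ → ℤ → ℤ → Fin (j+1) → ℂ}

def phi (c : ℤ → ℤ → ℂ) (τ z : ℂ) : ℂ := ∑' p : ℤ × ℤ, c p.1 p.2 * ee (p.1 * τ + p.2 * z)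

structure IsJac (k : ℕ) (m : ℤ) (c : ℤ → ℤ → ℂ) : Prop where
  pos : ∀ n r, c n r ≠ 0 → 1 ≤ n ∧ r^2 < 4*n*m
  summ : ∀ y V : ℝ, 0 < y → Summable fun p : ℤ × ℤ => ‖c p.1 p.2‖ * Real.exp (2*Real.pi*(V*|(p.2:ℝ)| - p.1*y))
  tr : ∀ n r t : ℤ, c (n + r*t + m*t^2) (r + 2*m*t) = c n r
  S : ∀ τ z : ℂ, 0 < τ.im → phi c (-1/τ) (z/τ) = τ^k * ee (m*z^2/τ) * phi c τ z

lemma coef_summ (ha : HasFE F a) (m : ℤ) (l : Fin (j+1)) (y V : ℝ) (hy : 0 < y) :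
    Summable fun p : ℤ × ℤ => ‖a p.1 p.2 m l‖ * Real.exp (2*Real.pi*(V*|(p.2:ℝ)| - p.1*y)) := by
  obtain ⟨Y, hY⟩ : ∃ Y : ℝ, V^2 < y * Y := ⟨(V^2+1)/y, by rw [mul_div_cancel₀ _ hy.ne']; linarith⟩
  have hinj : Function.Injective (fun p : ℤ × ℤ => ((p.1, p.2, m) : ℤ × ℤ × ℤ)) := by
    rintro ⟨x, y⟩ ⟨x', y'⟩ h; simpa using h
  have key : ∀ W : ℝ, W^2 = V^2 → Summable fun p : ℤ × ℤ => ‖a p.1 p.2 m l‖ * Real.exp (2*Real.pi*(W*p.2 - p.1*y)) := by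
    intro W hW
    have hD : InD (y * I) (-W * I) (Y * I) := by
      refine ⟨by simpa using hy, ?_⟩
      simp; linarith
    have h1 := ((ha _ _ _ hD l).summable.norm.comp_injective hinj).mul_left (Real.exp (2*Real.pi*(m*Y)))
    refine h1.congr fun p => ?_
    simp only [Function.comp, norm_mul, ch, norm_ee]
    rw [mul_left_comm, ← Real.exp_add]
    congr 2; simp; ring
  refine Summable.of_nonneg_of_le (fun p => by positivity) (fun p => ?_) ((key V rfl).add (key (-V) (by ring)))
  rcases abs_cases (p.2:ℝ) with ⟨h, -⟩ | ⟨h, -⟩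
  · rw [h]; linarith [show 0 ≤ ‖a p.1 p.2 m l‖ * Real.exp (2*Real.pi*(-V*p.2 - p.1*y)) by positivity]
  · rw [h, mul_neg, ← neg_mul]; linarith [show 0 ≤ ‖a p.1 p.2 m l‖ * Real.exp (2*Real.pi*(V*p.2 - p.1*y)) by positivity]

lemma phi_summ {c : ℤ → ℤ → ℂ} (hc : ∀ y V : ℝ, 0 < y → Summable fun p : ℤ × ℤ => ‖c p.1 p.2‖ * Real.exp (2*Real.pi*(V*|(p.2:ℝ)| - p.1*y)))
    {τ : ℂ} (z : ℂ) (hτ : 0 < τ.im) : Summable fun p : ℤ × ℤ => c p.1 p.2 * ee (p.1 * τ + p.2 * z) := by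
  refine Summable.of_norm_bounded (hc τ.im |z.im| hτ) fun p => ?_
  rw [norm_mul, norm_ee]
  gcongr
  rw [← mul_neg]
  have := Real.pi_pos
  gcongr
  have h1 := neg_abs_le ((p.2:ℝ) * z.im)
  rw [abs_mul] at h1
  simp
  linarith

lemma F_index (ha : HasFE F a) {τ z τ₂ : ℂ} (h : InD τ z τ₂) (l : Fin (j+1)) :
    HasSum (fun m : ℤ => phi (fun n r => a n r m l) τ z * ee (m * τ₂)) (F (mt τ z τ₂) l) := by
  let e : ℤ × (ℤ × ℤ) ≃ ℤ × ℤ × ℤ :=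
    { toFun := fun p => (p.2.1, p.2.2, p.1), invFun := fun p => (p.2.2, p.1, p.2.1),
      left_inv := fun _ => rfl, right_inv := fun _ => rfl }
  have h1 := ha _ _ _ h l
  rw [← e.hasSum_iff] at h1
  refine h1.prod_fiberwise fun m => ?_
  have h2 := ((phi_summ (c := fun n r => a n r m l) (fun y V hy => coef_summ ha m l y V hy) z h.1).hasSum.mul_right (ee (m * τ₂)))
  refine HasSum.congr_fun_eq h2 fun p => ?_
  show a p.1 p.2 m l * ch (p.1, p.2, m) τ z τ₂ = _
  rw [ch, ee_add, mul_assoc]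

lemma symCoeff_tri (j : ℕ) (τ x : ℂ) (l i : Fin (j+1)) :
    symCoeff j !![τ, x; 0, 1] l i = τ^(j-(l:ℕ)) * (((Polynomial.X + Polynomial.C x)^(l:ℕ)).coeff i) := by
  have : symCoeff j !![τ, x; 0, 1] l i = ((Polynomial.C (τ^(j-(l:ℕ)))) * (Polynomial.X + Polynomial.C x)^(l:ℕ)).coeff i := by
    simp [symCoeff, add_comm]
  rw [this, Polynomial.coeff_C_mul]

lemma symAct_tri (j : ℕ) (τ x : ℂ) (L : Fin (j+1)) (v : Fin (j+1) → ℂ) (hv : ∀ l, L < l → v l = 0) :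
    symAct j !![τ, x; 0, 1] v L = τ^(j-(L:ℕ)) * v L := by
  unfold symAct
  rw [Finset.sum_eq_single L]
  · rw [symCoeff_tri, Polynomial.coeff_X_add_C_pow]; simp
  · intro l _ hl
    rcases lt_or_gt_of_ne hl with h | h
    · rw [symCoeff_tri, Polynomial.coeff_X_add_C_pow, Nat.choose_eq_zero_of_lt h]; simp
    · rw [hv l h, mul_zero]
  · simp

lemma coef_isJac (hF : IsCF j F) (ha : HasFE F a) (m : ℤ) (L : Fin (j+1))
    (hL : ∀ n r l, L < l → a n r m l = 0) : IsJac (2 + (j - (L:ℕ))) m (fun n r => a n r m L) where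
  pos n r h := by
    have := coef_supp hF ha n r m (fun h0 => h (by simp [h0]))
    exact ⟨this.1, this.2.2⟩
  summ y V hy := coef_summ ha m L y V hy
  tr n r t := by
    have h := coef_U hF ha 1 0 t 1 1 (by ring) (by norm_num) n r m
    have hMe : !![((1:ℤ)*(1:ℤ) : ℂ), -((1:ℤ)*((t : ℤ):ℂ)); -((1:ℤ)*(0:ℤ)), (1:ℤ)*(1:ℤ)] = !![1, (-(t:ℂ)); 0, 1] := by
      simp
    rw [hMe] at h
    have h1 := congrFun h L
    have e1 : n * 1^2 + r * (1*t) + m * t^2 = n + r*t + m*t^2 := by ring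
    have e2 : 2 * n * (1*0) + r * (1*1+0*t) + 2*m*(t*1) = r + 2*m*t := by ring
    have e3 : n * 0^2 + r * (0*1) + m * 1^2 = m := by ring
    rw [e1, e2, e3, symAct_tri _ _ _ _ _ (fun l hl => hL _ _ l hl)] at h1
    simpa using h1.symm
  S τ z hτ := by
    have hτ0 : τ ≠ 0 := by rintro rfl; exact lt_irrefl _ hτ
    have hτ' : 0 < (-1/τ).im := by
      rw [neg_div, one_div, Complex.neg_im, Complex.inv_im, neg_div, neg_neg]
      exact div_pos hτ (Complex.normSq_pos.2 hτ0)
    obtain ⟨Y, hY1, hY2⟩ : ∃ Y : ℝ, z.im^2 < τ.im * Y ∧ (z/τ).im^2 < (-1/τ).im * (Y - (z^2/τ).im) := by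
      refine ⟨max ((z.im^2+1)/τ.im) (((z/τ).im^2+1)/(-1/τ).im + (z^2/τ).im), ?_, ?_⟩
      · calc z.im^2 < τ.im * ((z.im^2+1)/τ.im) := by rw [mul_div_cancel₀ _ hτ.ne']; linarith
          _ ≤ _ := by gcongr; exact le_max_left _ _
      · calc (z/τ).im^2 < (-1/τ).im * (((z/τ).im^2+1)/(-1/τ).im + (z^2/τ).im - (z^2/τ).im) := by
              rw [add_sub_cancel_right, mul_div_cancel₀ _ hτ'.ne']; linarith
          _ ≤ _ := by gcongr; exact le_max_right _ _
    have key : (fun m' : ℤ => phi (fun n r => a n r m' L) (-1/τ) (z/τ) * ee (-(m'*(z^2/τ))) -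
        τ^2 * ∑ l, symCoeff j !![τ, z; 0, 1] l L * phi (fun n r => a n r m' l) τ z) = 0 := by
      apply unique1 _ Y
      intro x
      have hD1 : InD τ z (x + Y * I) := ⟨hτ, by simpa using hY1⟩
      have hD2 : InD (-1/τ) (z/τ) (x + Y * I - z^2/τ) := ⟨hτ', by
        rw [Complex.sub_im]; simpa using hY2⟩
      have h1 := F_index ha hD2 L
      rw [CF_J hF τ z _ hD1] at h1
      have h2 : HasSum (fun m' : ℤ => τ^2 * ∑ l, symCoeff j !![τ, z; 0, 1] l L * (phi (fun n r => a n r m' l) τ z * ee (m' * (x + Y * I))))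
        (τ^2 * ∑ l, symCoeff j !![τ, z; 0, 1] l L * F (mt τ z (x + Y * I)) l) :=
        (hasSum_sum fun l _ => (F_index ha hD1 l).mul_left _).mul_left _
      have h3 := h1.sub h2
      have e0 : (τ^2 • symAct j !![τ, z; 0, 1] (F (mt τ z (x + Y * I)))) L =
        τ^2 * ∑ l, symCoeff j !![τ, z; 0, 1] l L * F (mt τ z (x + Y * I)) l := rfl
      rw [e0, sub_self] at h3
      refine HasSum.congr_fun_eq h3 fun m' => ?_
      rw [mul_sub, sub_eq_add_neg ((m':ℂ) * (x + Y*I)), ee_add, sub_mul]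
      congr 1
      · ring
      · rw [mul_assoc, Finset.sum_mul]
        congr 1
        exact Finset.sum_congr rfl fun l _ => by ring
    have h4 := congrFun key m
    simp only [Pi.zero_apply] at h4
    have h5 : ∑ l, symCoeff j !![τ, z; 0, 1] l L * phi (fun n r => a n r m l) τ z = τ^(j-(L:ℕ)) * phi (fun n r => a n r m L) τ z := by
      refine symAct_tri j τ z L (fun l => phi (fun n r => a n r m l) τ z) ?_
      intro l hl
      simp [phi, hL _ _ l hl]
    rw [h5, sub_eq_zero] at h4
    have h6 : ee (m*z^2/τ) * ee (-(m*(z^2/τ))) = 1 := by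
      rw [← ee_add, show m*z^2/τ + -(m*(z^2/τ)) = ((0:ℤ):ℂ) by push_cast; ring, ee_int]
    rw [pow_add]
    calc _ = phi (fun n r => a n r m L) (-1/τ) (z/τ) * (ee (m*z^2/τ) * ee (-(m*(z^2/τ)))) := by rw [h6, mul_one]
      _ = ee (m*z^2/τ) * (phi (fun n r => a n r m L) (-1/τ) (z/τ) * ee (-(m*(z^2/τ)))) := by ring
      _ = _ := by rw [h4]; ring

lemma F_zero (hF : IsCF j F) (ha : HasFE F a) (h : ∀ n r m, a n r m = 0) : F = 0 := by
  funext τ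
  by_cases hτ : τ ∈ H2
  · obtain ⟨τ₁, z, τ₂, hD, rfl⟩ := H2_eq hτ
    funext l
    have := ha _ _ _ hD l
    simp only [h, Pi.zero_apply, zero_mul] at this
    exact this.unique hasSum_zero
  · exact hF.2.2.2 τ hτ

end SV

namespace SV
set_option linter.unusedSectionVars false

/-- shifted linear exponent -/
def sx (m : ℤ) (x : ℝ) (p : ℤ × ℤ) : ℝ := p.2 + 2 * m * x
/-- shifted quadratic exponent -/
def qx (m : ℤ) (x : ℝ) (p : ℤ × ℤ) : ℝ := p.1 + p.2 * x + m * x^2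

/-- torsion Taylor coefficient -/
def ft (m : ℤ) (c : ℤ → ℤ → ℂ) (x y : ℝ) (l : ℕ) (τ : ℂ) : ℂ :=
  ∑' p : ℤ × ℤ, c p.1 p.2 * ee (p.2 * y) * (sx m x p : ℂ)^l * ee (qx m x p * τ)

def Gt (m : ℤ) (c : ℤ → ℤ → ℂ) (x y : ℝ) (τ z : ℂ) : ℂ :=
  ∑' p : ℤ × ℤ, c p.1 p.2 * ee (p.2 * y) * ee (qx m x p * τ) * ee (sx m x p * z)

variable {k : ℕ} {m : ℤ} {c : ℤ → ℤ → ℂ}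

lemma norm_ee_real (x : ℝ) : ‖ee x‖ = 1 := by rw [norm_ee]; simp

lemma norm_ee_realmul (x : ℝ) (τ : ℂ) : ‖ee (x * τ)‖ = Real.exp (-(2*Real.pi*(x*τ.im))) := by
  rw [norm_ee]; simp

lemma norm_ee_iy (n : ℤ) (y : ℝ) : ‖ee (n * y)‖ = 1 := by
  rw [norm_ee]; simp

lemma master_summ (hc : IsJac k m c) (x V y : ℝ) (hy : 0 < y) (hV : 0 ≤ V) (i : ℕ) :
    Summable fun p : ℤ × ℤ => ‖c p.1 p.2‖ * |sx m x p|^i * Real.exp (2*Real.pi*(V * |sx m x p|)) *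
      Real.exp (-(2*Real.pi*(qx m x p * y))) := by
  have h := (hc.summ y (V + 1 + |x| * y) hy).mul_left
    ((i.factorial : ℝ) * Real.exp (2*Real.pi*((V+1)*|2*m*x| - m*x^2*y)))
  refine Summable.of_nonneg_of_le (fun p => by positivity) (fun p => ?_) h
  have h1 : |sx m x p|^i ≤ i.factorial * Real.exp (2*Real.pi*|sx m x p|) := by
    have h2 := Real.pow_div_factorial_le_exp |sx m x p| (abs_nonneg _) i
    rw [div_le_iff₀ (by positivity), mul_comm] at h2
    refine h2.trans ?_
    gcongr
    nlinarith [Real.pi_gt_three, abs_nonneg (sx m x p)]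
  calc ‖c p.1 p.2‖ * |sx m x p|^i * Real.exp (2*Real.pi*(V * |sx m x p|)) * Real.exp (-(2*Real.pi*(qx m x p * y)))
      ≤ ‖c p.1 p.2‖ * (i.factorial * Real.exp (2*Real.pi*|sx m x p|)) * Real.exp (2*Real.pi*(V * |sx m x p|)) *
        Real.exp (-(2*Real.pi*(qx m x p * y))) := by gcongr
    _ = (i.factorial * ‖c p.1 p.2‖) * Real.exp (2*Real.pi * ((V+1)*|sx m x p| - qx m x p * y)) := by
        have : 2*Real.pi * ((V+1)*|sx m x p| - qx m x p * y) = 2*Real.pi*|sx m x p| + 2*Real.pi*(V * |sx m x p|) + -(2*Real.pi*(qx m x p * y)) := by ring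
        rw [this, Real.exp_add, Real.exp_add]; ring
    _ ≤ (i.factorial * ‖c p.1 p.2‖) * Real.exp (2*Real.pi * (((V+1)*|2*m*x| - m*x^2*y) + ((V+1+|x| * y)*|(p.2:ℝ)| - p.1*y))) := by
        have := Real.pi_pos
        gcongr
        have e1 : |sx m x p| ≤ |(p.2:ℝ)| + |2*m*x| := abs_add_le _ _
        have e2 : -(|(p.2:ℝ)| * |x|) ≤ (p.2:ℝ) * x := by rw [← abs_mul]; exact neg_abs_le _
        have e3 : (V+1)*|sx m x p| ≤ (V+1)*(|(p.2:ℝ)| + |2*m*x|) := by gcongr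
        have e4 : -(|(p.2:ℝ)| * |x|) * y ≤ (p.2:ℝ) * x * y := by gcongr
        unfold qx
        nlinarith
    _ = _ := by rw [mul_add, Real.exp_add]; ring

lemma master_summ0 (hc : IsJac k m c) (x y : ℝ) (hy : 0 < y) (i : ℕ) :
    Summable fun p : ℤ × ℤ => ‖c p.1 p.2‖ * |sx m x p|^i * Real.exp (-(2*Real.pi*(qx m x p * y))) := by
  simpa using master_summ hc x 0 y hy le_rfl i

lemma norm_term (x y : ℝ) (l : ℕ) (τ : ℂ) (p : ℤ × ℤ) :
    ‖c p.1 p.2 * ee (p.2 * y) * (sx m x p : ℂ)^l * ee (qx m x p * τ)‖ =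
     ‖c p.1 p.2‖ * |sx m x p|^l * Real.exp (-(2*Real.pi*(qx m x p * τ.im))) := by
  rw [norm_mul, norm_mul, norm_mul, norm_ee_iy, norm_ee_realmul, norm_pow, Complex.norm_real, Real.norm_eq_abs, mul_one]

lemma ft_hasSum (hc : IsJac k m c) (x y : ℝ) (l : ℕ) {τ : ℂ} (hτ : 0 < τ.im) :
    HasSum (fun p : ℤ × ℤ => c p.1 p.2 * ee (p.2 * y) * (sx m x p : ℂ)^l * ee (qx m x p * τ)) (ft m c x y l τ) := by
  refine (Summable.of_norm ?_).hasSum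
  simp only [norm_term]
  exact master_summ0 hc x τ.im hτ l

lemma qx_pos (hc : IsJac k m c) (x : ℝ) (p : ℤ × ℤ) (h : c p.1 p.2 ≠ 0) : 0 < qx m x p := by
  obtain ⟨h1, h2⟩ := hc.pos _ _ h
  have h1' : (1:ℝ) ≤ p.1 := by exact_mod_cast h1
  have h2' : (p.2:ℝ)^2 < 4 * p.1 * m := by exact_mod_cast h2
  have : 0 < 4 * (p.1:ℝ) * qx m x p := by
    have e : 4 * (p.1:ℝ) * qx m x p = (2 * p.1 + p.2 * x)^2 + (4*p.1*m - p.2^2) * x^2 := by unfold qx; ring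
    rw [e]
    by_cases hx : x = 0
    · subst hx; simp; positivity
    · have : 0 < (4*p.1*m - (p.2:ℝ)^2) * x^2 := mul_pos (by linarith) (by positivity)
      positivity
  exact (pos_iff_pos_of_mul_pos this).1 (by linarith)

lemma ft_diff (hc : IsJac k m c) (x y : ℝ) (l : ℕ) : DifferentiableOn ℂ (ft m c x y l) {τ | 0 < τ.im} := by
  intro τ hτ
  have hτ : 0 < τ.im := hτ
  have hop : IsOpen {σ : ℂ | τ.im / 2 < σ.im} := isOpen_lt continuous_const Complex.continuous_im
  have h1 : DifferentiableOn ℂ (ft m c x y l) {σ : ℂ | τ.im / 2 < σ.im} := by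
    refine differentiableOn_tsum_of_summable_norm (master_summ0 hc x (τ.im/2) (by linarith) l) ?_ hop ?_
    · intro p
      unfold ee
      fun_prop
    · intro p σ hσ
      have hσ : τ.im/2 < σ.im := hσ
      rw [norm_term]
      by_cases h0 : c p.1 p.2 = 0
      · simp [h0]
      · have := qx_pos hc x p h0
        have := Real.pi_pos
        gcongr
  have hm : τ ∈ {σ : ℂ | τ.im / 2 < σ.im} := by show τ.im/2 < τ.im; linarith
  exact ((h1 τ hm).differentiableAt (hop.mem_nhds hm)).differentiableWithinAt

lemma ft_bound (hc : IsJac k m c) (x y : ℝ) (l : ℕ) (β : ℝ) (hβ : ∀ p : ℤ × ℤ, c p.1 p.2 ≠ 0 → β ≤ qx m x p) :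
    ∃ C : ℝ, 0 ≤ C ∧ ∀ τ : ℂ, 1 ≤ τ.im → ‖ft m c x y l τ‖ ≤ C * Real.exp (-2*Real.pi*(β*τ.im)) := by
  have hs := master_summ0 hc x 1 one_pos l
  set C₀ := ∑' p : ℤ × ℤ, ‖c p.1 p.2‖ * |sx m x p|^l * Real.exp (-(2*Real.pi*(qx m x p * 1))) with hC
  refine ⟨C₀ * Real.exp (2*Real.pi*β), by have : 0 ≤ C₀ := tsum_nonneg fun _ => by positivity
                                          positivity, ?_⟩
  intro τ hτ
  have h1 := (hs.mul_right (Real.exp (2*Real.pi*β) * Real.exp (-2*Real.pi*(β*τ.im)))).hasSum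
  rw [tsum_mul_right, ← hC] at h1
  rw [mul_assoc]
  refine tsum_of_norm_bounded h1 fun p => ?_
  rw [norm_term]
  by_cases h0 : c p.1 p.2 = 0
  · simp [h0]
  · rw [mul_assoc (‖c p.1 p.2‖ * |sx m x p|^l), ← Real.exp_add, ← Real.exp_add]
    have := hβ p h0
    have := Real.pi_pos
    gcongr
    have h3 : 0 ≤ 2*Real.pi * ((qx m x p - β) * (τ.im - 1)) := by
      have : 0 ≤ (qx m x p - β) * (τ.im - 1) := mul_nonneg (by linarith) (by linarith)
      positivity
    linarith

lemma ft_T (x y : ℝ) (l : ℕ) (τ : ℂ) : ft m c x y l (τ+1) = ee (m * x^2) * ft m c x (y+x) l τ := by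
  unfold ft
  rw [← tsum_mul_left]
  refine tsum_congr fun p => ?_
  have e1 : ee (qx m x p * (τ+1)) = ee (qx m x p * τ) * (ee (p.2*x) * ee (m*x^2)) := by
    rw [mul_add, ee_add, ← ee_add (p.2*x), mul_one]
    congr 1
    have : ((qx m x p : ℝ) : ℂ) = ((p.1 : ℤ) : ℂ) + (p.2*x+m*x^2) := by unfold qx; push_cast; ring
    rw [this, ee_add, ee_int, one_mul]
  have e2 : ee (p.2 * ((y+x : ℝ) : ℂ)) = ee (p.2*y) * ee (p.2*x) := by
    rw [← ee_add]; congr 1; push_cast; ring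
  rw [e1, e2]; ring

lemma ft_y (x y : ℝ) (l : ℕ) (τ : ℂ) : ft m c x (y+1) l τ = ft m c x y l τ := by
  unfold ft
  refine tsum_congr fun p => ?_
  have e2 : ee (p.2 * ((y+1 : ℝ) : ℂ)) = ee (p.2*y) := by
    have : (p.2:ℂ) * ((y+1 : ℝ) : ℂ) = p.2*y + p.2 := by push_cast; ring
    rw [this, ee_add, ee_int, mul_one]
  rw [e2]

def shE (m : ℤ) : ℤ × ℤ ≃ ℤ × ℤ where
  toFun p := (p.1 + p.2 + m, p.2 + 2*m)
  invFun p := (p.1 - p.2 + m, p.2 - 2*m)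
  left_inv p := by ext <;> simp; ring
  right_inv p := by ext <;> simp; ring

lemma shE_apply (m : ℤ) (p : ℤ × ℤ) : shE m p = (p.1 + p.2 + m, p.2 + 2*m) := rfl

lemma ft_x (hc : IsJac k m c) (x y : ℝ) (l : ℕ) (τ : ℂ) : ft m c (x+1) y l τ = ee (-2*m*y) * ft m c x y l τ := by
  unfold ft
  rw [← (shE m).tsum_eq (fun p : ℤ × ℤ => c p.1 p.2 * ee (p.2 * y) * (sx m x p : ℂ)^l * ee (qx m x p * τ)), ← tsum_mul_left]
  refine tsum_congr fun p => ?_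
  have e1 : c (p.1 + p.2 + m) (p.2 + 2*m) = c p.1 p.2 := by
    have := hc.tr p.1 p.2 1
    rw [← this]; congr 1 <;> ring
  have e2 : sx m x (p.1 + p.2 + m, p.2 + 2*m) = sx m (x+1) p := by unfold sx; push_cast; ring
  have e3 : qx m x (p.1 + p.2 + m, p.2 + 2*m) = qx m (x+1) p := by unfold qx; push_cast; ring
  have e4 : ee (((p.2 + 2*m : ℤ):ℂ) * y) = ee (p.2*y) * ee (2*m*y) := by
    rw [← ee_add]; congr 1; push_cast; ring
  have e5 : ee (-2*m*y) * ee (2*m*y) = 1 := by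
    rw [← ee_add, show (-2*m*y + 2*m*y : ℂ) = ((0:ℤ):ℂ) by push_cast; ring, ee_int]
  rw [shE_apply]
  simp only [e1, e2, e3, e4]
  linear_combination (-(c p.1 p.2 * ee (p.2*y) * (sx m (x+1) p)^l * ee (qx m (x+1) p * τ))) * e5

lemma norm_ft_x (hc : IsJac k m c) (x y : ℝ) (l : ℕ) (τ : ℂ) : ‖ft m c (x+1) y l τ‖ = ‖ft m c x y l τ‖ := by
  rw [ft_x hc, norm_mul]
  have : (-2*m*y : ℂ) = ((-2*m*y : ℝ) : ℂ) := by push_cast; ring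
  rw [this, norm_ee_real, one_mul]

lemma norm_ft_T (x y : ℝ) (l : ℕ) (τ : ℂ) : ‖ft m c x y l (τ+1)‖ = ‖ft m c x (y+x) l τ‖ := by
  rw [ft_T, norm_mul]
  have : (m*x^2 : ℂ) = ((m*x^2 : ℝ) : ℂ) := by push_cast; ring
  rw [this, norm_ee_real, one_mul]

lemma norm_ft_int (hc : IsJac k m c) (x y : ℝ) (s t : ℤ) (l : ℕ) (τ : ℂ) :
    ‖ft m c (x+s) (y+t) l τ‖ = ‖ft m c x y l τ‖ := by
  have h1 : ∀ y, ‖ft m c (x+s) y l τ‖ = ‖ft m c x y l τ‖ := by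
    intro y
    induction s using Int.induction_on with
    | zero => simp
    | succ i ih => rw [← ih]; push_cast; rw [← add_assoc, norm_ft_x hc]
    | pred i ih => rw [← ih, ← norm_ft_x hc]; congr 2; push_cast; ring
  rw [h1]
  congr 1
  induction t using Int.induction_on with
  | zero => simp
  | succ i ih => rw [← ih]; push_cast; rw [← add_assoc, ft_y]
  | pred i ih => rw [← ih, ← ft_y]; congr 1; push_cast; ring

end SV

namespace SV
set_option linter.unusedSectionVars false

variable {k : ℕ} {m : ℤ} {c : ℤ → ℤ → ℂ}

lemma Gt_eq (x y : ℝ) (τ z : ℂ) : Gt m c x y τ z = ee (m*x^2*τ + 2*m*x*z) * phi c τ (z + x*τ + y) := by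
  unfold Gt phi
  rw [← tsum_mul_left]
  refine tsum_congr fun p => ?_
  have : ee (m*x^2*τ + 2*m*x*z) * ee (p.1*τ + p.2*(z + x*τ+y)) = ee (p.2*y) * ee (qx m x p * τ) * ee (sx m x p * z) := by
    rw [← ee_add, ← ee_add, ← ee_add]; congr 1; unfold qx sx; push_cast; ring
  linear_combination (-c p.1 p.2) * this

lemma Gt_S (hc : IsJac k m c) (x y : ℝ) (τ z : ℂ) (hτ : 0 < τ.im) :
    Gt m c x y (-1/τ) (z/τ) = τ^k * ee (m*z^2/τ - 2*m*x*y) * Gt m c y (-x) τ z := by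
  have hτ0 : τ ≠ 0 := by rintro rfl; exact lt_irrefl _ hτ
  rw [Gt_eq, Gt_eq]
  have e1 : z/τ + x*(-1/τ) + y = (z + y*τ + ((-x : ℝ):ℂ))/τ := by push_cast; field_simp; ring
  rw [e1, hc.S τ _ hτ]
  have e2 : ee (m*x^2*(-1/τ) + 2*m*x*(z/τ)) * ee (m*(z + y*τ + ((-x : ℝ):ℂ))^2/τ) =
      ee (m*z^2/τ - 2*m*x*y) * ee (m*y^2*τ+2*m*y*z) := by
    rw [← ee_add, ← ee_add]; congr 1; push_cast; field_simp; ring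
  linear_combination (τ^k * phi c τ (z + y*τ + ((-x : ℝ):ℂ))) * e2

lemma Gt_taylor (hc : IsJac k m c) (x y : ℝ) (τ : ℂ) (hτ : 0 < τ.im) (l : ℕ) (h0 : ∀ i < l, ft m c x y i τ = 0) :
    Tendsto (fun z => Gt m c x y τ z / z^l) (𝓝[≠] 0) (𝓝 ((2*Real.pi*I)^l/l.factorial * ft m c x y l τ)) := by
  have hsb := master_summ hc x 1 τ.im hτ zero_le_one (l+1)
  set C := ∑' p : ℤ × ℤ, ‖c p.1 p.2‖ * |sx m x p|^(l+1) * Real.exp (2*Real.pi*(1 * |sx m x p|)) *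
      Real.exp (-(2*Real.pi*(qx m x p * τ.im))) with hC
  have key : ∀ z : ℂ, ‖z‖ ≤ 1 → ‖Gt m c x y τ z - (2*Real.pi*I)^l/l.factorial * ft m c x y l τ * z^l‖ ≤
      (2*Real.pi)^(l+1) * C * ‖z‖^(l+1) := by
    intro z hz
    have hsum : HasSum (fun p : ℤ × ℤ => ∑ i ∈ Finset.range (l+1), ((2*Real.pi*I)^i/i.factorial * z^i) *
        (c p.1 p.2 * ee (p.2 * y) * (sx m x p : ℂ)^i * ee (qx m x p * τ)))
        (∑ i ∈ Finset.range (l+1), ((2*Real.pi*I)^i/i.factorial * z^i) * ft m c x y i τ) :=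
      hasSum_sum fun i _ => (ft_hasSum hc x y i hτ).mul_left _
    have e0 : ∑ i ∈ Finset.range (l+1), ((2*Real.pi*I)^i/i.factorial * z^i) * ft m c x y i τ =
      (2*Real.pi*I)^l/l.factorial * ft m c x y l τ * z^l := by
      rw [Finset.sum_range_succ, Finset.sum_eq_zero]
      · ring
      · intro i hi; rw [h0 i (Finset.mem_range.1 hi), mul_zero]
    rw [e0] at hsum
    have hG : Summable fun p : ℤ × ℤ => c p.1 p.2 * ee (p.2 * y) * ee (qx m x p * τ) * ee (sx m x p * z) := by
      refine Summable.of_norm_bounded (master_summ hc x |z.im| τ.im hτ (abs_nonneg _) 0) fun p => ?_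
      rw [norm_mul, norm_mul, norm_mul, norm_ee_iy, norm_ee_realmul, norm_ee_realmul]
      rw [mul_one, pow_zero, mul_one, mul_right_comm]
      have := Real.pi_pos
      gcongr
      rw [← mul_neg]
      gcongr
      have := neg_abs_le (sx m x p * z.im)
      rw [abs_mul] at this
      linarith
    have hd := hG.hasSum.sub hsum
    have hCs := (hsb.hasSum.mul_left ((2*Real.pi)^(l+1))).mul_right (‖z‖^(l+1))
    rw [← hC] at hCs
    have : Gt m c x y τ z - (2*Real.pi*I)^l/l.factorial * ft m c x y l τ * z^l = _ := hd.tsum_eq.symm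
    rw [this]
    refine tsum_of_norm_bounded hCs fun p => ?_
    have e1 : c p.1 p.2 * ee (p.2 * y) * ee (qx m x p * τ) * ee (sx m x p * z) -
      ∑ i ∈ Finset.range (l+1), ((2*Real.pi*I)^i/i.factorial * z^i) *
        (c p.1 p.2 * ee (p.2 * y) * (sx m x p : ℂ)^i * ee (qx m x p * τ)) =
      (c p.1 p.2 * ee (p.2 * y) * ee (qx m x p * τ)) * (ee (sx m x p * z) -
        ∑ i ∈ Finset.range (l+1), (2*Real.pi*I*(sx m x p * z))^i/i.factorial) := by
      rw [mul_sub, Finset.mul_sum]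
      congr 1
      refine Finset.sum_congr rfl fun i _ => ?_
      rw [mul_pow _ (_ * _), mul_pow (sx m x p : ℂ)]; ring
    rw [e1, norm_mul, norm_mul, norm_mul, norm_ee_iy, norm_ee_realmul]
    have h2 := Complex.norm_exp_sub_sum_le_norm_mul_exp (2*Real.pi*I*(sx m x p * z)) (l+1)
    have h3 : ‖2*Real.pi*I*(sx m x p * z)‖ = 2*Real.pi*(|sx m x p| * ‖z‖) := by
      simp [abs_of_pos Real.pi_pos]
    rw [h3] at h2
    have h4 : Real.exp (2*Real.pi*(|sx m x p| * ‖z‖)) ≤ Real.exp (2*Real.pi*(1*|sx m x p|)) := by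
      have := Real.pi_pos
      refine Real.exp_le_exp.2 (mul_le_mul_of_nonneg_left ?_ (by positivity))
      nlinarith [abs_nonneg (sx m x p)]
    unfold ee at *
    calc _ ≤ ‖c p.1 p.2‖ * 1 * Real.exp (-(2*Real.pi*(qx m x p * τ.im))) * ((2*Real.pi*(|sx m x p| * ‖z‖))^(l+1) * Real.exp (2*Real.pi*(1*|sx m x p|))) := by
          have := Real.pi_pos
          refine mul_le_mul_of_nonneg_left (h2.trans ?_) (by positivity)
          gcongr
      _ = _ := by rw [mul_pow, mul_pow]; ring
  rw [tendsto_iff_norm_sub_tendsto_zero]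
  have hlim : Tendsto (fun z : ℂ => (2*Real.pi)^(l+1) * C * ‖z‖) (𝓝[≠] 0) (𝓝 0) := by
    have h1 : Tendsto (fun z : ℂ => (2*Real.pi)^(l+1) * C * ‖z‖) (𝓝 0) (𝓝 ((2*Real.pi)^(l+1) * C * ‖(0:ℂ)‖)) :=
      (continuous_const.mul continuous_norm).tendsto 0
    rw [norm_zero, mul_zero] at h1
    exact h1.mono_left nhdsWithin_le_nhds
  refine squeeze_zero' (Eventually.of_forall fun _ => norm_nonneg _) ?_ hlim
  have hball : Metric.closedBall (0:ℂ) 1 ∈ 𝓝[≠] (0:ℂ) :=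
    mem_nhdsWithin_of_mem_nhds (Metric.closedBall_mem_nhds _ one_pos)
  filter_upwards [hball, self_mem_nhdsWithin] with z hz hz0
  have hz1 : ‖z‖ ≤ 1 := by simpa using hz
  have hz0 : z ≠ 0 := hz0
  have hzp : 0 < ‖z‖ := norm_pos_iff.2 hz0
  have e : Gt m c x y τ z / z^l - (2*Real.pi*I)^l/l.factorial * ft m c x y l τ =
    (Gt m c x y τ z - (2*Real.pi*I)^l/l.factorial * ft m c x y l τ * z^l) / z^l := by
    rw [sub_div, mul_div_cancel_right₀ _ (pow_ne_zero _ hz0)]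
  rw [e, norm_div, norm_pow, div_le_iff₀ (by positivity)]
  refine (key z hz1).trans (le_of_eq ?_)
  ring

lemma ft_S (hc : IsJac k m c) (x y : ℝ) (τ : ℂ) (hτ : 0 < τ.im) (l : ℕ)
    (h1 : ∀ i < l, ft m c x y i (-1/τ) = 0) (h2 : ∀ i < l, ft m c y (-x) i τ = 0) :
    ‖ft m c x y l (-1/τ)‖ = ‖τ‖^(k+l) * ‖ft m c y (-x) l τ‖ := by
  have hτ0 : τ ≠ 0 := by rintro rfl; exact lt_irrefl _ hτ
  have hτ' : 0 < (-1/τ).im := by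
    rw [neg_div, one_div, Complex.neg_im, Complex.inv_im, neg_div, neg_neg]
    exact div_pos hτ (Complex.normSq_pos.2 hτ0)
  have t1 := Gt_taylor hc x y (-1/τ) hτ' l h1
  have t2 := Gt_taylor hc y (-x) τ hτ l h2
  have t0 : Tendsto (fun z : ℂ => z/τ) (𝓝[≠] 0) (𝓝[≠] 0) := by
    apply tendsto_nhdsWithin_of_tendsto_nhds_of_eventually_within
    · have : Tendsto (fun z : ℂ => z/τ) (𝓝 0) (𝓝 (0/τ)) := (continuous_id.div_const τ).tendsto 0
      rw [zero_div] at this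
      exact this.mono_left nhdsWithin_le_nhds
    · filter_upwards [self_mem_nhdsWithin] with z hz
      exact div_ne_zero hz hτ0
  have t3 := t1.comp t0
  have t4 : Tendsto (fun z : ℂ => τ^(k+l) * ee (m*z^2/τ - 2*m*x*y)) (𝓝[≠] 0) (𝓝 (τ^(k+l) * ee (m*0^2/τ - 2*m*x*y))) := by
    have : Continuous (fun z : ℂ => τ^(k+l) * ee (m*z^2/τ - 2*m*x*y)) := by unfold ee; fun_prop
    exact (this.tendsto 0).mono_left nhdsWithin_le_nhds
  have t5 := t4.mul t2
  have t6 := tendsto_nhds_unique (t3.congr' ?_) t5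
  · have e1 : (m*0^2/τ - 2*m*x*y : ℂ) = ((-2*m*x*y : ℝ) : ℂ) := by push_cast; ring
    have hne : ((2*Real.pi*I)^l/l.factorial : ℂ) ≠ 0 := by
      have : (l.factorial : ℂ) ≠ 0 := by exact_mod_cast l.factorial_ne_zero
      have : (Real.pi:ℂ) ≠ 0 := by exact_mod_cast Real.pi_ne_zero
      have := I_ne_zero
      exact div_ne_zero (pow_ne_zero _ (by simpa)) (by assumption)
    have t7 := congrArg norm t6
    rw [e1, norm_mul, norm_mul, norm_mul, norm_mul, norm_ee_real, norm_pow, mul_one] at t7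
    have hp := norm_pos_iff.2 hne
    have : ‖((2*Real.pi*I)^l/l.factorial : ℂ)‖ * ‖ft m c x y l (-1/τ)‖ = ‖((2*Real.pi*I)^l/l.factorial : ℂ)‖ * (‖τ‖^(k+l) * ‖ft m c y (-x) l τ‖) := by
      linarith
    exact mul_left_cancel₀ hp.ne' this
  · filter_upwards [self_mem_nhdsWithin] with z hz
    have hz : z ≠ 0 := hz
    simp only [Function.comp]
    rw [Gt_S hc x y τ z hτ, div_pow]
    field_simp
    ring

end SV

namespace SV
set_option linter.unusedSectionVars false

lemma exists_zero_of_prod {ι : Type*} (s : Finset ι) (g : ι → ℂ → ℂ)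
    (hd : ∀ i, DifferentiableOn ℂ (g i) {τ | 0 < τ.im})
    (h : ∀ τ : ℂ, 0 < τ.im → ∏ i ∈ s, g i τ = 0) : ∃ i ∈ s, ∀ τ : ℂ, 0 < τ.im → g i τ = 0 := by
  classical
  have hop : IsOpen {τ : ℂ | 0 < τ.im} := isOpen_lt continuous_const Complex.continuous_im
  have hconn : IsPreconnected {τ : ℂ | 0 < τ.im} := (convex_halfSpace_im_gt 0).isPreconnected
  induction s using Finset.induction_on with
  | empty => exfalso; have := h I (by simp); simp at this
  | insert i s hi ih =>
    have h1 := (hd i).analyticOnNhd hop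
    have h2 : DifferentiableOn ℂ (fun τ => ∏ i ∈ s, g i τ) {τ | 0 < τ.im} :=
      DifferentiableOn.fun_finsetProd fun i _ => hd i
    rcases h1.eq_zero_or_eq_zero_of_mul_eq_zero (h2.analyticOnNhd hop)
      (fun τ hτ => by have h5 := h τ hτ; rwa [Finset.prod_insert hi] at h5) hconn with h3 | h3
    · exact ⟨i, Finset.mem_insert_self _ _, h3⟩
    · obtain ⟨i', hi', h4⟩ := ih h3
      exact ⟨i', Finset.mem_insert_of_mem hi', h4⟩

lemma prod_vanish {ι : Type*} [Fintype ι] (g : ι → ℂ → ℂ) (T S : Equiv.Perm ι) (w : ℕ)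
    (hd : ∀ i, DifferentiableOn ℂ (g i) {τ | 0 < τ.im})
    (hT : ∀ i, ∀ τ : ℂ, 0 < τ.im → ‖g i (τ+1)‖ = ‖g (T i) τ‖)
    (hS : ∀ i, ∀ τ : ℂ, 0 < τ.im → ‖g i (-1/τ)‖ = ‖τ‖^w * ‖g (S i) τ‖)
    (β : ι → ℝ)
    (hb : ∀ i, ∃ C : ℝ, 0 ≤ C ∧ ∀ τ : ℂ, 1 ≤ τ.im → ‖g i τ‖ ≤ C * Real.exp (-2*Real.pi*(β i*τ.im)))
    (hβ : (Fintype.card ι * w : ℝ) < 12 * ∑ i, β i)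
    (htr : ∀ P : ι → Prop, (∀ i, P i → P (T i)) → (∀ i, P i → P (S i)) → ∀ i i', P i → P i') :
    ∀ i, ∀ τ : ℂ, 0 < τ.im → g i τ = 0 := by
  choose C hC0 hC using hb
  have key : ∀ τ : ℂ, 0 < τ.im → ∏ i, g i τ = 0 := by
    refine level_one_zero (fun τ => ∏ i, g i τ) (Fintype.card ι * w) (∑ i, β i) (∏ i, C i) ?_ ?_ ?_ ?_ (by push_cast; exact hβ)
    · exact DifferentiableOn.fun_finsetProd fun i _ => hd i
    · intro τ hτ
      rw [norm_prod, norm_prod, Finset.prod_congr rfl fun i _ => hT i τ hτ]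
      exact Equiv.prod_comp T (fun i => ‖g i τ‖)
    · intro τ hτ
      rw [norm_prod, norm_prod, Finset.prod_congr rfl fun i _ => hS i τ hτ, Finset.prod_mul_distrib,
        Finset.prod_const, Finset.card_univ, ← pow_mul, mul_comm w]
      congr 1
      exact Equiv.prod_comp S (fun i => ‖g i τ‖)
    · intro τ hτ
      rw [norm_prod]
      calc ∏ i, ‖g i τ‖ ≤ ∏ i, (C i * Real.exp (-2*Real.pi*(β i*τ.im))) :=
            Finset.prod_le_prod (fun i _ => norm_nonneg _) fun i _ => hC i τ hτ
        _ = _ := by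
          rw [Finset.prod_mul_distrib, ← Real.exp_sum, ← Finset.mul_sum, ← Finset.sum_mul]
  obtain ⟨i₀, -, h0⟩ := exists_zero_of_prod Finset.univ g hd key
  intro i
  refine htr (fun i => ∀ τ : ℂ, 0 < τ.im → g i τ = 0) ?_ ?_ i₀ i h0
  · intro i hi τ hτ
    rw [← norm_eq_zero, ← hT i τ hτ, hi _ (by simpa using hτ), norm_zero]
  · intro i hi τ hτ
    have hτ0 : τ ≠ 0 := by rintro rfl; exact lt_irrefl _ hτ
    have hτ' : 0 < (-1/τ).im := by
      rw [neg_div, one_div, Complex.neg_im, Complex.inv_im, neg_div, neg_neg]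
      exact div_pos hτ (Complex.normSq_pos.2 hτ0)
    have h1 := hS i τ hτ
    rw [hi _ hτ', norm_zero] at h1
    have h2 : 0 < ‖τ‖^w := by have := norm_pos_iff.2 hτ0; positivity
    rw [← norm_eq_zero]
    rcases mul_eq_zero.1 h1.symm with h | h
    · exact absurd h h2.ne'
    · exact h

variable {k : ℕ} {m : ℤ} {c : ℤ → ℤ → ℂ}

/-- torsion indices -/
abbrev TI (N : ℕ) := {v : ZMod N × ZMod N // N = 1 ∨ v ≠ 0}

def TT (N : ℕ) : Equiv.Perm (TI N) where
  toFun v := ⟨(v.1.1, v.1.2 + v.1.1), by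
    rcases v.2 with h | h
    · exact Or.inl h
    · right; intro h0; apply h
      simp only [Prod.mk_eq_zero] at h0
      ext
      · exact h0.1
      · have := h0.2; rw [h0.1, add_zero] at this; exact this⟩
  invFun v := ⟨(v.1.1, v.1.2 - v.1.1), by
    rcases v.2 with h | h
    · exact Or.inl h
    · right; intro h0; apply h
      simp only [Prod.mk_eq_zero] at h0
      ext
      · exact h0.1
      · have := h0.2; rw [h0.1, sub_zero] at this; exact this⟩
  left_inv v := by ext <;> simp
  right_inv v := by ext <;> simp

def SS (N : ℕ) : Equiv.Perm (TI N) where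
  toFun v := ⟨(v.1.2, -v.1.1), by
    rcases v.2 with h | h
    · exact Or.inl h
    · right; intro h0; apply h
      simp only [Prod.mk_eq_zero, neg_eq_zero] at h0
      ext
      · exact h0.2
      · exact h0.1⟩
  invFun v := ⟨(-v.1.2, v.1.1), by
    rcases v.2 with h | h
    · exact Or.inl h
    · right; intro h0; apply h
      simp only [Prod.mk_eq_zero, neg_eq_zero] at h0
      ext
      · exact h0.2
      · exact h0.1⟩
  left_inv v := by ext <;> simp
  right_inv v := by ext <;> simp

lemma TT_apply (N : ℕ) (v : TI N) : (TT N v).1 = (v.1.1, v.1.2 + v.1.1) := rfl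
lemma SS_apply (N : ℕ) (v : TI N) : (SS N v).1 = (v.1.2, -v.1.1) := rfl

def gt (m : ℤ) (c : ℤ → ℤ → ℂ) (N : ℕ) (l : ℕ) (v : ZMod N × ZMod N) (τ : ℂ) : ℂ :=
  ft m c ((v.1.val : ℝ)/N) ((v.2.val : ℝ)/N) l τ

lemma val_cong {N : ℕ} [NeZero N] (a : ZMod N) (u : ℤ) (h : (u : ZMod N) = a) :
    ∃ s : ℤ, (u : ℝ)/N = (a.val : ℝ)/N + s := by
  have hN : (N:ℝ) ≠ 0 := by exact_mod_cast NeZero.ne N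
  have h1 : ((u - a.val : ℤ) : ZMod N) = 0 := by push_cast; rw [ZMod.natCast_zmod_val, h, sub_self]
  rw [ZMod.intCast_zmod_eq_zero_iff_dvd] at h1
  obtain ⟨s, hs⟩ := h1
  refine ⟨s, ?_⟩
  have : (u:ℝ) - a.val = N * s := by exact_mod_cast hs
  field_simp
  linarith

lemma norm_gt (hc : IsJac k m c) {N : ℕ} [NeZero N] (l : ℕ) (v : ZMod N × ZMod N) (x y : ℤ)
    (hx : (x : ZMod N) = v.1) (hy : (y : ZMod N) = v.2) (τ : ℂ) :
    ‖ft m c ((x:ℝ)/N) ((y:ℝ)/N) l τ‖ = ‖gt m c N l v τ‖ := by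
  obtain ⟨s, hs⟩ := val_cong v.1 x hx
  obtain ⟨t, ht⟩ := val_cong v.2 y hy
  rw [hs, ht, norm_ft_int hc]; rfl

lemma gt_diff (hc : IsJac k m c) (N l : ℕ) (v : ZMod N × ZMod N) :
    DifferentiableOn ℂ (gt m c N l v) {τ | 0 < τ.im} := ft_diff hc _ _ l

theorem torsion_vanish (hc : IsJac k m c) (N : ℕ) [NeZero N] (n0 : ℤ) (hn0 : ∀ n r, c n r ≠ 0 → n0 ≤ n)
    (htr : ∀ P : TI N → Prop, (∀ i, P i → P (TT N i)) → (∀ i, P i → P (SS N i)) → ∀ i i', P i → P i')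
    (l : ℕ) (hl : (Fintype.card (TI N) * (k + l : ℕ) : ℝ) < 12 * ∑ v : TI N, (if v.1.1 = 0 then (n0:ℝ) else 1/(N:ℝ)^2)) :
    ∀ v : TI N, ∀ τ : ℂ, 0 < τ.im → gt m c N l v.1 τ = 0 := by
  have hN : (0:ℝ) < N := by exact_mod_cast Nat.pos_of_ne_zero (NeZero.ne N)
  induction l using Nat.strong_induction_on with
  | _ l ih =>
  have ih' : ∀ i < l, ∀ v : TI N, ∀ τ : ℂ, 0 < τ.im → gt m c N i v.1 τ = 0 := by
    intro i hi
    refine ih i hi (lt_of_le_of_lt ?_ hl)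
    gcongr
  obtain ⟨g, hg⟩ : ∃ g : TI N → ℂ → ℂ, ∀ v, g v = gt m c N l v.1 := ⟨_, fun _ => rfl⟩
  obtain ⟨β, hβ⟩ : ∃ β : TI N → ℝ, ∀ v, β v = if v.1.1 = 0 then (n0:ℝ) else 1/(N:ℝ)^2 := ⟨_, fun _ => rfl⟩
  simp only [← hβ] at hl
  suffices h : ∀ v : TI N, ∀ τ : ℂ, 0 < τ.im → g v τ = 0 by
    intro v τ hτ; rw [← hg]; exact h v τ hτ
  refine prod_vanish g (TT N) (SS N) (k+l) (fun v => by rw [hg]; exact gt_diff hc N l v.1) ?_ ?_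
    β ?_ hl htr
  · intro v τ hτ
    rw [hg, hg]
    unfold gt
    rw [norm_ft_T]
    have := norm_gt hc l (TT N v).1 (v.1.1.val) (v.1.2.val + v.1.1.val) (by simp [TT_apply]) (by simp [TT_apply]) τ
    unfold gt at this
    rw [← this]; congr 2; push_cast; ring
  · intro v τ hτ
    rw [hg, hg]
    have hSS : ∀ i, ‖ft m c ((v.1.2.val : ℝ)/N) (-((v.1.1.val : ℝ)/N)) i τ‖ = ‖gt m c N i (SS N v).1 τ‖ := by
      intro i
      have := norm_gt hc i (SS N v).1 (v.1.2.val) (-v.1.1.val) (by simp [SS_apply]) (by simp [SS_apply]) τ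
      rw [← this]; congr 2; push_cast; ring
    have hτ0 : τ ≠ 0 := by rintro rfl; exact lt_irrefl _ hτ
    have hτ' : 0 < (-1/τ).im := by
      rw [neg_div, one_div, Complex.neg_im, Complex.inv_im, neg_div, neg_neg]
      exact div_pos hτ (Complex.normSq_pos.2 hτ0)
    have e1 : gt m c N l v.1 (-1/τ) = ft m c ((v.1.1.val : ℝ)/N) ((v.1.2.val : ℝ)/N) l (-1/τ) := rfl
    rw [e1, ft_S hc _ _ τ hτ l (fun i hi => ih' i hi v _ hτ') ?_, hSS]
    intro i hi
    rw [← norm_eq_zero, hSS, ih' i hi _ _ hτ, norm_zero]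
  · intro v
    rw [hg, hβ]
    refine ft_bound hc _ _ l _ ?_
    intro p hp
    by_cases h0 : v.1.1 = 0
    · rw [if_pos h0, h0]
      have := hn0 _ _ hp
      have : (n0:ℝ) ≤ p.1 := by exact_mod_cast this
      simpa [qx] using this
    · rw [if_neg h0]
      have h1 := qx_pos hc ((v.1.1.val : ℝ)/N) p hp
      have e : qx m ((v.1.1.val : ℝ)/N) p = ((p.1 * N^2 + p.2 * v.1.1.val * N + m * v.1.1.val^2 : ℤ) : ℝ) / N^2 := by
        unfold qx; push_cast; field_simp
      rw [e] at h1 ⊢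
      have h2 : (0:ℝ) < ((p.1 * N^2 + p.2 * v.1.1.val * N + m * v.1.1.val^2 : ℤ) : ℝ) := by
        by_contra hneg
        push Not at hneg
        exact absurd h1 (not_lt.2 (div_nonpos_of_nonpos_of_nonneg hneg (by positivity)))
      have h3 : (1:ℤ) ≤ (p.1 * N^2 + p.2 * v.1.1.val * N + m * v.1.1.val^2 : ℤ) := by exact_mod_cast h2
      have h4 : (1:ℝ) ≤ ((p.1 * N^2 + p.2 * v.1.1.val * N + m * v.1.1.val^2 : ℤ) : ℝ) := by exact_mod_cast h3
      gcongr

lemma moment_of_ft (hc : IsJac k m c) (y : ℝ) (l : ℕ) (h : ∀ τ : ℂ, 0 < τ.im → ft m c 0 y l τ = 0) (n : ℤ) :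
    HasSum (fun r : ℤ => c n r * ee (r*y) * (r:ℂ)^l) 0 := by
  have hfib : ∀ τ : ℂ, 0 < τ.im → ∀ n : ℤ, Summable fun r : ℤ => c n r * ee (r*y) * (r:ℂ)^l := by
    intro τ hτ n
    have h1 := ((ft_hasSum hc 0 y l hτ).summable.comp_injective (Prod.mk_right_injective n)).mul_right (ee (n*τ))⁻¹
    refine h1.congr fun r => ?_
    simp only [Function.comp, sx, qx]
    have := ee_ne (n*τ)
    push_cast
    simp only [mul_zero, add_zero, ne_eq, OfNat.ofNat_ne_zero, not_false_eq_true, zero_pow]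
    field_simp
  have key : (fun n : ℤ => ∑' r : ℤ, c n r * ee (r*y) * (r:ℂ)^l) = 0 := by
    apply unique1 _ 1
    intro x
    have hτ : 0 < ((x:ℂ) + (1:ℝ) * I).im := by simp
    have h1 := ft_hasSum hc 0 y l hτ
    rw [h _ hτ] at h1
    refine h1.prod_fiberwise fun n => ?_
    refine HasSum.congr_fun_eq ((hfib _ hτ n).hasSum.mul_right _) fun r => ?_
    simp [sx, qx]
  have h2 := (hfib I (by simp) n).hasSum
  have h3 := congrFun key n
  simp only [Pi.zero_apply] at h3
  rwa [h3] at h2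

lemma htr_of {N : ℕ} (h : ∀ v v' : ZMod N × ZMod N, (N = 1 ∨ v ≠ 0) → (N = 1 ∨ v' ≠ 0) → ∃ a b d e : Fin 3,
    (fun v : ZMod N × ZMod N => (v.1, v.2 + (e:ℕ) * v.1)) ((fun v : ZMod N × ZMod N => (v.2, -v.1)) ((fun v : ZMod N × ZMod N => (v.1, v.2 + (a:ℕ) * v.1)) ((fun v : ZMod N × ZMod N => (v.2, -v.1))
      ((fun v : ZMod N × ZMod N => (v.1, v.2 + (b:ℕ) * v.1)) ((fun v : ZMod N × ZMod N => (v.2, -v.1))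
        ((fun v : ZMod N × ZMod N => (v.1, v.2 + (d:ℕ) * v.1)) v)))))) = v') :
    ∀ P : TI N → Prop, (∀ i, P i → P (TT N i)) → (∀ i, P i → P (SS N i)) → ∀ i i', P i → P i' := by
  intro P hT hS i i' hi
  have hTn : ∀ (a : ℕ) (i : TI N), P i → P ((TT N)^[a] i) := by
    intro a
    induction a with
    | zero => intro i hi; exact hi
    | succ a ih => intro i hi; rw [Function.iterate_succ_apply']; exact hT _ (ih i hi)
  have hTv : ∀ (a : ℕ) (i : TI N), ((TT N)^[a] i).1 = (i.1.1, i.1.2 + a * i.1.1) := by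
    intro a
    induction a with
    | zero => intro i; simp
    | succ a ih => intro i; rw [Function.iterate_succ_apply', TT_apply, ih]; ext <;> simp; ring
  obtain ⟨a, b, d, e, h⟩ := h i.1 i'.1 i.2 i'.2
  have h1 := hTn e _ (hS _ (hTn a _ (hS _ (hTn b _ (hS _ (hTn d _ hi))))))
  have : (TT N)^[e] (SS N ((TT N)^[a] (SS N ((TT N)^[b] (SS N ((TT N)^[d] i)))))) = i' := by
    apply Subtype.ext
    rw [hTv, SS_apply, hTv, SS_apply, hTv, SS_apply, hTv]
    exact h
  rwa [this] at h1

lemma moment1 (hc : IsJac k m c) (n0 : ℤ) (hn0 : ∀ n r, c n r ≠ 0 → n0 ≤ n) (l : ℕ) (hl : ((k + l : ℕ) : ℤ) < 12 * n0) (n : ℤ) :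
    HasSum (fun r : ℤ => c n r * (r:ℂ)^l) 0 := by
  have h := torsion_vanish hc 1 n0 hn0 (htr_of (by decide)) l ?_ ⟨0, Or.inl rfl⟩
  · have h1 := moment_of_ft hc 0 l (fun τ hτ => by simpa [gt] using h τ hτ) n
    have e0 : ee 0 = 1 := by simpa using ee_int 0
    simpa [e0] using h1
  · have h2 : ((k + l : ℕ) : ℝ) < 12 * n0 := by exact_mod_cast hl
    have e : ∀ v : TI 1, (if v.1.1 = 0 then (n0:ℝ) else 1/((1:ℕ):ℝ)^2) = n0 := fun v => if_pos (Subsingleton.elim _ _)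
    have hcard : Fintype.card (TI 1) = 1 := by decide
    rw [Finset.sum_congr rfl fun v _ => e v, Finset.sum_const, Finset.card_univ, hcard]
    simpa using h2

lemma moment2 (hc : IsJac k m c) (l : ℕ) (hl : k + l < 6) (n : ℤ) :
    HasSum (fun r : ℤ => c n r * ee (r*((1/2 : ℝ):ℂ)) * (r:ℂ)^l) 0 := by
  refine moment_of_ft hc (1/2) l ?_ n
  have h := torsion_vanish hc 2 1 (fun n r h => (hc.pos n r h).1) (htr_of (by decide)) l ?_ ⟨(0, 1), Or.inr (by decide)⟩
  · intro τ hτ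
    have := h τ hτ
    have e : (1 : ZMod 2).val = 1 := rfl
    simpa [gt, e] using this
  · have hcard : Fintype.card (TI 2) = 3 := by decide
    have hf : (Finset.univ.filter fun v : TI 2 => v.1.1 = 0).card = 1 := by decide
    have hf' : (Finset.univ.filter fun v : TI 2 => ¬ v.1.1 = 0).card = 2 := by decide
    rw [hcard, Finset.sum_ite, Finset.sum_const, Finset.sum_const, hf, hf']
    have h2 : ((k + l : ℕ) : ℝ) < 6 := by exact_mod_cast hl
    norm_num at h2 ⊢; linarith

set_option maxRecDepth 100000 in
set_option maxHeartbeats 2000000 in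
lemma moment3 (hc : IsJac k m c) (l : ℕ) (hl : k + l < 4) (n : ℤ) (i : ℕ) (hi : i = 1 ∨ i = 2) :
    HasSum (fun r : ℤ => c n r * ee (r*((i/3 : ℝ):ℂ)) * (r:ℂ)^l) 0 := by
  refine moment_of_ft hc (i/3) l ?_ n
  have hh := torsion_vanish hc 3 1 (fun n r h => (hc.pos n r h).1) (htr_of (by decide)) l ?_
  · intro τ hτ
    rcases hi with rfl | rfl
    · have := hh ⟨(0, 1), Or.inr (by decide)⟩ τ hτ
      have e : (1 : ZMod 3).val = 1 := rfl
      simpa [gt, e] using this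
    · have := hh ⟨(0, 2), Or.inr (by decide)⟩ τ hτ
      have e : (2 : ZMod 3).val = 2 := rfl
      simpa [gt, e] using this
  · have hcard : Fintype.card (TI 3) = 8 := by decide
    have hf : (Finset.univ.filter fun v : TI 3 => v.1.1 = 0).card = 2 := by decide
    have hf' : (Finset.univ.filter fun v : TI 3 => ¬ v.1.1 = 0).card = 6 := by decide
    rw [hcard, Finset.sum_ite, Finset.sum_const, Finset.sum_const, hf, hf']
    have h2 : ((k + l : ℕ) : ℝ) < 4 := by exact_mod_cast hl
    norm_num at h2 ⊢; linarith

end SV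

namespace SV
set_option linter.unusedSectionVars false

lemma deg_count {ι : Type*} (p : Polynomial ℂ) (hp : p ≠ 0) (s : Finset ι) (z : ι → ℂ) (hz : Set.InjOn z s) (μ : ι → ℕ)
    (h : ∀ i ∈ s, (Polynomial.X - Polynomial.C (z i))^(μ i) ∣ p) : ∑ i ∈ s, μ i ≤ p.natDegree := by
  have h1 : ∏ i ∈ s, (Polynomial.X - Polynomial.C (z i))^(μ i) ∣ p := by
    refine Finset.prod_dvd_of_coprime ?_ h
    intro i hi i' hi' hne
    apply IsCoprime.pow
    apply Polynomial.isCoprime_X_sub_C_of_isUnit_sub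
    rw [isUnit_iff_ne_zero, sub_ne_zero]
    exact fun h => hne (hz hi hi' h)
  have h2 := Polynomial.natDegree_le_of_dvd h1 hp
  rw [Polynomial.natDegree_prod_of_monic _ _ (fun i _ => (Polynomial.monic_X_sub_C _).pow _)] at h2
  simpa using h2

lemma dvd_of_moments (b : ℕ → ℂ) (D : ℕ) (R ζ : ℂ) (hζ : ζ ≠ 0) (L : ℕ)
    (h : ∀ l < L, ∑ i ∈ Finset.range (D+1), b i * ζ^i * (i - R)^l = 0) :
    (Polynomial.X - Polynomial.C ζ)^L ∣ ∑ i ∈ Finset.range (D+1), Polynomial.monomial i (b i) := by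
  set P := ∑ i ∈ Finset.range (D+1), Polynomial.monomial i (b i) with hP
  have hq : ∀ q : Polynomial ℂ, q.natDegree < L → ∑ i ∈ Finset.range (D+1), b i * ζ^i * q.eval ((i:ℂ) - R) = 0 := by
    intro q hq
    simp only [Polynomial.eval_eq_sum_range, Finset.mul_sum]
    rw [Finset.sum_comm]
    refine Finset.sum_eq_zero fun l hl => ?_
    have := h l (by rw [Finset.mem_range] at hl; omega)
    calc _ = q.coeff l * ∑ i ∈ Finset.range (D+1), b i * ζ^i * (i - R)^l := by
          rw [Finset.mul_sum]; exact Finset.sum_congr rfl fun i _ => by ring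
      _ = 0 := by rw [this, mul_zero]
  have h1 : Polynomial.X^L ∣ Polynomial.taylor ζ P := by
    rw [Polynomial.X_pow_dvd_iff]
    intro d hd
    rw [Polynomial.taylor_coeff, hP, map_sum, Polynomial.eval_finsetSum]
    have h2 := hq ((descPochhammer ℂ d).comp (Polynomial.X + Polynomial.C R)) (by
      rw [Polynomial.natDegree_comp, descPochhammer_natDegree]; simpa using hd)
    have h3 : (d.factorial : ℂ) * ζ^d * ∑ i ∈ Finset.range (D+1), Polynomial.eval ζ (Polynomial.hasseDeriv d (Polynomial.monomial i (b i))) = 0 := by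
      rw [← h2, Finset.mul_sum]
      refine Finset.sum_congr rfl fun i _ => ?_
      rw [Polynomial.hasseDeriv_monomial, Polynomial.eval_monomial, Polynomial.eval_comp]
      simp only [Polynomial.eval_add, Polynomial.eval_X, Polynomial.eval_C, sub_add_cancel]
      rw [descPochhammer_eval_eq_descFactorial, Nat.descFactorial_eq_factorial_mul_choose]
      rcases le_or_gt d i with hdi | hdi
      · have : ζ^i = ζ^d * ζ^(i-d) := by rw [← pow_add]; congr 1; omega
        rw [this]; push_cast; ring
      · rw [Nat.choose_eq_zero_of_lt hdi]; simp
    have h4 : (d.factorial : ℂ) * ζ^d ≠ 0 := mul_ne_zero (by exact_mod_cast d.factorial_ne_zero) (pow_ne_zero _ hζ)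
    exact (mul_eq_zero.1 h3).resolve_left h4
  obtain ⟨Q, hQ⟩ := h1
  refine ⟨Polynomial.taylor (-ζ) Q, ?_⟩
  have h5 : Polynomial.taylor (-ζ) (Polynomial.taylor ζ P) = P := by
    rw [Polynomial.taylor_taylor]; simp
  rw [← h5, hQ, Polynomial.taylor_mul, Polynomial.taylor_pow, Polynomial.taylor_X, Polynomial.C_neg, sub_eq_add_neg]

lemma ee_injOn : Set.InjOn (fun x : ℝ => ee x) (Set.Ico 0 1) := by
  intro x hx y hy h
  have h : ee x = ee y := h
  unfold ee at h
  rw [Complex.exp_eq_exp_iff_exists_int] at h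
  obtain ⟨n, hn⟩ := h
  have h2 : (2*Real.pi*I : ℂ) ≠ 0 := by simp
  have h3 : (x:ℂ) = y + n := by
    apply mul_left_cancel₀ h2
    rw [hn]; ring
  have h4 : x = y + n := by exact_mod_cast h3
  have h5 : (n:ℝ) < 1 := by linarith [hx.2, hy.1]
  have h6 : (-1:ℝ) < n := by linarith [hx.1, hy.2]
  have h7 : n < 1 := by exact_mod_cast h5
  have h8 : -1 < n := by exact_mod_cast h6
  have : n = 0 := by omega
  rw [h4, this]; simp

/-- total order available -/
def Lb (n k : ℕ) : ℕ := (12*n-k) + (6-k) + 2*(4-k)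

variable {k : ℕ} {m : ℤ} {c : ℤ → ℤ → ℂ}

lemma lemmaW (hc : IsJac k m c) (n : ℕ) (hn0 : ∀ n' r, c n' r ≠ 0 → (n:ℤ) ≤ n')
    (hR : ∀ r, c n r ≠ 0 → 2 * r.natAbs < Lb n k) : ∀ r, c n r = 0 := by
  by_contra hcon
  push Not at hcon
  obtain ⟨r0, hr0⟩ := hcon
  obtain ⟨R, hRdef⟩ : ∃ R : ℕ, R = (Lb n k - 1)/2 := ⟨_, rfl⟩
  have hR' : ∀ r, c n r ≠ 0 → r.natAbs ≤ R := fun r hr => by have := hR r hr; omega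
  have hpos := hR r0 hr0
  have hsum : ∀ (y : ℝ) (l : ℕ), HasSum (fun r : ℤ => c n r * ee (r*y) * (r:ℂ)^l) 0 →
      ∑ i ∈ Finset.range (2*R+1), c n ((i:ℤ) - R) * (ee y)^i * ((i:ℂ) - R)^l = 0 := by
    intro y l h
    have hinj : Function.Injective (fun i : ℕ => (i:ℤ) - R) := by
      intro i i' h; simpa using h
    have h1 : HasSum (fun i : ℕ => c n ((i:ℤ) - R) * ee (((i:ℤ) - R : ℤ)*y) * (((i:ℤ) - R : ℤ):ℂ)^l) 0 := by
      have := (Function.Injective.hasSum_iff hinj (f := fun r : ℤ => c n r * ee (r*y) * (r:ℂ)^l) (a := 0) ?_).2 h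
      · exact this
      · intro r hr
        have : c n r = 0 := by
          by_contra h0
          have := hR' r h0
          exact hr ⟨(r + R).toNat, by simp; omega⟩
        simp [this]
    have h2 := h1.unique (hasSum_sum_of_ne_finset_zero (s := Finset.range (2*R+1)) ?_)
    · have h3 : ∑ i ∈ Finset.range (2*R+1), c n ((i:ℤ) - R) * (ee y)^i * ((i:ℂ) - R)^l =
        ee (R*y) * ∑ i ∈ Finset.range (2*R+1), c n ((i:ℤ) - R) * ee (((i:ℤ) - R : ℤ)*y) * (((i:ℤ) - R : ℤ):ℂ)^l := by
        rw [Finset.mul_sum]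
        refine Finset.sum_congr rfl fun i _ => ?_
        have e : ee (R*y) * ee (((i:ℤ) - R : ℤ)*y) = (ee y)^i := by
          rw [← ee_add]; unfold ee; rw [← Complex.exp_nat_mul]; congr 1; push_cast; ring
        rw [← e]; push_cast; ring
      rw [h3, ← h2, mul_zero]
    · intro i hi
      have : c n ((i:ℤ) - R) = 0 := by
        by_contra h0
        have := hR' _ h0
        rw [Finset.mem_range] at hi
        omega
      simp [this]
  set P : Polynomial ℂ := ∑ i ∈ Finset.range (2*R+1), Polynomial.monomial i (c n ((i:ℤ) - R)) with hP
  have hdeg : P.natDegree ≤ 2*R := by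
    refine Polynomial.natDegree_sum_le_of_forall_le _ _ fun i hi => ?_
    rw [Finset.mem_range] at hi
    exact (Polynomial.natDegree_monomial_le _).trans (by omega)
  have hP0 : P ≠ 0 := by
    intro h0
    apply hr0
    have h1 : P.coeff (r0 + R).toNat = c n r0 := by
      have h2 := hR' _ hr0
      rw [hP, Polynomial.finsetSum_coeff]
      simp only [Polynomial.coeff_monomial]
      rw [Finset.sum_ite_eq' , if_pos (by rw [Finset.mem_range]; omega)]
      congr 1; omega
    rw [← h1, h0, Polynomial.coeff_zero]
  let y : Fin 4 → ℝ := ![0, 1/2, 1/3, 2/3]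
  let μ : Fin 4 → ℕ := ![12*n-k, 6-k, 4-k, 4-k]
  have hinj : Set.InjOn (fun i => ee (y i)) ((Finset.univ : Finset (Fin 4)) : Set (Fin 4)) := by
    intro i _ i' _ h
    have hy : ∀ i, y i ∈ Set.Ico (0:ℝ) 1 := by
      intro i; fin_cases i <;> simp [y] <;> norm_num
    have h1 := ee_injOn (hy i) (hy i') h
    revert h1
    fin_cases i <;> fin_cases i' <;> simp [y] <;> norm_num
  have hcount := deg_count P hP0 Finset.univ (fun i => ee (y i)) hinj μ (by
    intro i _
    apply dvd_of_moments (fun i : ℕ => c n ((i:ℤ) - R)) (2*R) R _ (ee_ne _)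
    intro l hl
    apply hsum
    fin_cases i
    · have := moment1 hc n hn0 l (by simp [μ] at hl; omega) n
      have e0 : ee 0 = 1 := by simpa using ee_int 0
      simpa [y, e0] using this
    · simpa [y] using moment2 hc l (by simp [μ] at hl; omega) n
    · simpa [y] using moment3 hc l (by simp [μ] at hl; omega) n 1 (Or.inl rfl)
    · simpa [y] using moment3 hc l (by simp [μ] at hl; omega) n 2 (Or.inr rfl))
  have : ∑ i, μ i = Lb n k := by
    simp [Fin.sum_univ_four, μ, Lb]; omega
  rw [this] at hcount
  omega

lemma Lb_anti (n k k' : ℕ) (h : k ≤ k') : Lb n k' ≤ Lb n k := by unfold Lb; omega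

variable {j : ℕ} {F : (Fin 2 → Fin 2 → ℂ) → (Fin (j + 1) → ℂ)}
  {a : ℤ → ℤ → ℤ → Fin (j+1) → ℂ}

/-- all coefficients of index `m` have order at least `μ` at infinity -/
def Ord (a : ℤ → ℤ → ℤ → Fin (j+1) → ℂ) (m : ℤ) (μ : ℕ) : Prop := ∀ n r (l : Fin (j+1)), j < l + μ → a n r m l = 0

/-- coefficients with small first entry vanish -/
def Van (a : ℤ → ℤ → ℤ → Fin (j+1) → ℂ) (m : ℤ) (N : ℕ) : Prop := ∀ n : ℤ, n < N → ∀ r, a n r m = 0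

lemma ordW (hF : IsCF j F) (ha : HasFE F a) (m N μ M : ℕ) (hA : Van a m N)
    (hfin : ∀ n < M, N ≤ n → ∀ r ≤ m, r*r < 4*n*m → ¬ (2*r < Lb n (μ+1)) → a n r m = 0 ∧ a n (-r) m = 0)
    (hM : 2*m + 1 + μ < 12*M) : Ord a m μ := by
  suffices h : ∀ i ≤ μ, Ord a m i from h μ le_rfl
  intro i
  induction i with
  | zero => intro _ n r l hl; exact absurd l.2 (by omega)
  | succ i ih =>
    intro hi
    have ih := ih (by omega)
    by_cases hij : i ≤ j
    · set L : Fin (j+1) := ⟨j - i, by omega⟩ with hL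
      have hc := coef_isJac hF ha m L (fun n r l hl => ih n r l (by
        have : j - i < (l:ℕ) := hl
        omega))
      have hk : 2 + (j - (L:ℕ)) = 2 + i := by simp [hL]; omega
      rw [hk] at hc
      have main : ∀ n : ℕ, ∀ r, a n r m L = 0 := by
        intro n
        induction n using Nat.strong_induction_on with
        | _ n ihn =>
        have hmin : ∀ n' r, a n' r m L ≠ 0 → (n:ℤ) ≤ n' := by
          intro n' r h
          by_contra hlt
          push Not at hlt
          have h1 := (hc.pos n' r h).1
          have := ihn n'.toNat (by omega) r
          rw [Int.toNat_of_nonneg (by omega)] at this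
          exact h this
        by_cases hnN : n < N
        · intro r; rw [hA n (by exact_mod_cast hnN) r]; rfl
        push Not at hnN
        refine lemmaW hc n hmin ?_
        intro r hr
        have hr2 := (hc.pos n r hr).2
        have hrm : r.natAbs ≤ m := by
          by_contra hgt
          push Not at hgt
          rcases le_total 0 r with h0 | h0
          · have := hc.tr n r (-1)
            have h2 := hmin (n + r * (-1) + m * (-1)^2) (r + 2*m*(-1)) (by rw [this]; exact hr)
            linarith [show (m:ℤ) < r by omega]
          · have := hc.tr n r 1
            have h2 := hmin (n + r * 1 + m * 1^2) (r + 2*m*1) (by rw [this]; exact hr)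
            linarith [show (m:ℤ) < -r by omega]
        by_cases hnM : n < M
        · by_contra hcon
          have hrr : r.natAbs * r.natAbs < 4*n*m := by
            zify; rw [← sq, sq_abs]; exact hr2
          have h3 : ¬ (2 * r.natAbs < Lb n (μ+1)) := fun h => hcon (lt_of_lt_of_le h (Lb_anti _ _ _ (by omega)))
          obtain ⟨h4, h5⟩ := hfin n hnM hnN _ hrm hrr h3
          apply hr
          rcases Int.natAbs_eq r with h | h
          · rw [h, h4]; rfl
          · rw [h, h5]; rfl
        · push Not at hnM
          unfold Lb; omega
      intro n r l hl
      rcases eq_or_ne l L with h | h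
      · rw [h]
        by_contra h0
        have h1 := (hc.pos n r h0).1
        apply h0
        have := main n.toNat r
        rwa [Int.toNat_of_nonneg (by omega)] at this
      · refine ih n r l ?_
        have : (l:ℕ) ≠ j - i := fun h' => h (Fin.ext h')
        omega
    · intro n r l hl
      exact ih n r l (by omega)

end SV

namespace SV
set_option linter.unusedSectionVars false

variable {j : ℕ} {F : (Fin 2 → Fin 2 → ℂ) → (Fin (j + 1) → ℂ)} {a : ℤ → ℤ → ℤ → Fin (j+1) → ℂ}

/-- polynomial attached to a vector -/
def pol (v : Fin (j+1) → ℂ) : Polynomial ℂ := ∑ l : Fin (j+1), Polynomial.C (v l) * Polynomial.X ^ (l:ℕ)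

lemma pol_coeff (v : Fin (j+1) → ℂ) (i : ℕ) : (pol v).coeff i = if h : i < j + 1 then v ⟨i, h⟩ else 0 := by
  unfold pol
  rw [Polynomial.finsetSum_coeff]
  simp only [Polynomial.coeff_C_mul, Polynomial.coeff_X_pow]
  split_ifs with h
  · rw [Finset.sum_eq_single ⟨i, h⟩]
    · simp
    · intro b _ hb
      rw [if_neg, mul_zero]
      intro h'; exact hb (Fin.ext h'.symm)
    · simp
  · apply Finset.sum_eq_zero
    intro b _
    rw [if_neg, mul_zero]
    intro h'; exact h (h' ▸ b.2)

lemma pol_eq_zero (v : Fin (j+1) → ℂ) (h : pol v = 0) : v = 0 := by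
  funext l
  have := pol_coeff v l
  rw [h, dif_pos l.2] at this
  simpa using this.symm

lemma pol_symAct (M : Matrix (Fin 2) (Fin 2) ℂ) (v : Fin (j+1) → ℂ) :
    pol (symAct j M v) = ∑ l : Fin (j+1), Polynomial.C (v l) *
      ((Polynomial.C (M 0 0) + Polynomial.C (M 1 0) * Polynomial.X) ^ (j - (l : ℕ)) *
    (Polynomial.C (M 0 1) + Polynomial.C (M 1 1) * Polynomial.X) ^ (l : ℕ)) := by
  ext i
  rw [pol_coeff, Polynomial.finsetSum_coeff]
  simp only [Polynomial.coeff_C_mul]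
  split_ifs with h
  · unfold symAct symCoeff
    exact Finset.sum_congr rfl fun l _ => mul_comm _ _
  · symm
    apply Finset.sum_eq_zero
    intro l _
    rw [Polynomial.coeff_eq_zero_of_natDegree_lt, mul_zero]
    have hlin : ∀ x y : ℂ, (Polynomial.C x + Polynomial.C y * Polynomial.X).natDegree ≤ 1 := by
      intro x y; rw [add_comm]; exact Polynomial.natDegree_linear_le
    have hp : ∀ (x y : ℂ) (e : ℕ), ((Polynomial.C x + Polynomial.C y * Polynomial.X)^e).natDegree ≤ e := by
      intro x y e
      exact (Polynomial.natDegree_pow_le_of_le e (hlin x y)).trans (by simp)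
    have h3 := Polynomial.natDegree_mul_le_of_le (hp (M 0 0) (M 1 0) (j - l)) (hp (M 0 1) (M 1 1) l)
    have := l.2
    omega

lemma dvd_pol (hF : IsCF j F) (ha : HasFE F a) (n ρ m q s : ℤ) (hq : q ≠ 0) (hc : IsCoprime q s) (μ : ℕ)
    (hO : Ord a (n * q^2 + ρ * (q * s) + m * s^2) μ) :
    (Polynomial.X - Polynomial.C ((s:ℂ)/q))^μ ∣ pol (a n ρ m) := by
  obtain ⟨u, v, huv⟩ := hc
  rw [coef_U hF ha v q (-u) s 1 (by linarith) (by norm_num) n ρ m, pol_symAct]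
  apply Finset.dvd_sum
  intro l _
  by_cases hl : j < l + μ
  · rw [hO _ _ l hl]; simp
  · apply dvd_mul_of_dvd_right
    apply dvd_mul_of_dvd_left
    have h1 : (Polynomial.X - Polynomial.C ((s:ℂ)/q))^μ ∣ (Polynomial.X - Polynomial.C ((s:ℂ)/q))^(j - l) :=
      pow_dvd_pow _ (by omega)
    refine h1.trans (pow_dvd_pow_of_dvd ⟨Polynomial.C (-(q:ℂ)), ?_⟩ _)
    have hq' : (q:ℂ) ≠ 0 := by exact_mod_cast hq
    have h2 : (Polynomial.C (s:ℂ)) = Polynomial.C ((s:ℂ)/q) * Polynomial.C (q:ℂ) := by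
      rw [← Polynomial.C_mul, div_mul_cancel₀ _ hq']
    simp only [Matrix.of_apply, Matrix.cons_val', Matrix.cons_val_zero, Matrix.cons_val_one, Matrix.cons_val_fin_one,
      Int.cast_one, one_mul]
    rw [h2, Polynomial.C_neg]
    ring

/-- test vectors -/
def VL : Finset (ℤ × ℤ) := (((Finset.Icc 1 4 : Finset ℤ) ×ˢ (Finset.Icc (-4) 4 : Finset ℤ))).filter
  fun v => Int.gcd v.1 v.2 = 1

def HO (a : ℤ → ℤ → ℤ → Fin (j+1) → ℂ) (O : ℕ → ℕ) : Prop := ∀ m : ℤ, Ord a m (O m.toNat)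

lemma VL_inj : ∀ v ∈ VL, ∀ w ∈ VL, v.2 * w.1 = w.2 * v.1 → v = w := by
  decide +kernel

lemma kill (hF : IsCF j F) (ha : HasFE F a) (hj : j ≤ 52) {O : ℕ → ℕ} (hO : HO a O) (n ρ m : ℤ)
    (h : 52 < O m.toNat + ∑ v ∈ VL, O (n * v.1^2 + ρ * (v.1 * v.2) + m * v.2^2).toNat) : a n ρ m = 0 := by
  by_contra hne
  have hp : pol (a n ρ m) ≠ 0 := fun h0 => hne (pol_eq_zero _ h0)
  have hpos : ∀ v ∈ VL, (0:ℤ) < v.1 := by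
    intro v hv
    rw [VL, Finset.mem_filter, Finset.mem_product, Finset.mem_Icc] at hv
    linarith [hv.1.1.1]
  have h1 := deg_count (pol (a n ρ m)) hp VL (fun v => (v.2:ℂ)/v.1) (by
    intro v hv w hw hvw
    have h1 := hpos v hv
    have h2 := hpos w hw
    have h3 : (v.1:ℂ) ≠ 0 := by exact_mod_cast h1.ne'
    have h4 : (w.1:ℂ) ≠ 0 := by exact_mod_cast h2.ne'
    simp only at hvw
    rw [div_eq_div_iff h3 h4] at hvw
    exact VL_inj v hv w hw (by exact_mod_cast hvw)) _ (by
    intro v hv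
    refine dvd_pol hF ha n ρ m v.1 v.2 (hpos v hv).ne' ?_ _ (hO _)
    rw [VL, Finset.mem_filter] at hv
    exact Int.isCoprime_iff_gcd_eq_one.2 hv.2)
  have h2 : (pol (a n ρ m)).natDegree + O m.toNat ≤ j := by
    by_contra hcon
    push Not at hcon
    have h3 := pol_coeff (a n ρ m) (pol (a n ρ m)).natDegree
    rw [Polynomial.coeff_natDegree] at h3
    split_ifs at h3 with h4
    · rw [hO m n ρ ⟨_, h4⟩ (by simpa using hcon)] at h3
      exact hp (Polynomial.leadingCoeff_eq_zero.1 h3)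
    · exact hp (Polynomial.leadingCoeff_eq_zero.1 h3)
  omega

lemma swap0 (hF : IsCF j F) (ha : HasFE F a) (n ρ m : ℤ) (h : a m ρ n = 0) : a n ρ m = 0 := by
  rw [coef_U hF ha 0 1 1 0 (-1) (by norm_num) (by norm_num) n ρ m]
  simp [h, symAct_zero]

lemma neg0 (hF : IsCF j F) (ha : HasFE F a) (n ρ m : ℤ) (h : a n ρ m = 0) : a n (-ρ) m = 0 := by
  rw [coef_U hF ha 1 0 0 (-1) (-1) (by norm_num) (by norm_num) n (-ρ) m]
  simp [h, symAct_zero]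

lemma van_one (hF : IsCF j F) (ha : HasFE F a) (m : ℤ) : Van a m 1 := by
  intro n hn r
  by_contra h
  have := (coef_supp hF ha _ _ _ h).1
  push_cast at hn
  omega

lemma van_succ (hF : IsCF j F) (ha : HasFE F a) (m N : ℕ) (hV : Van a m N)
    (h : ∀ r ≤ m, r * r < 4 * N * m → a N r m = 0) : Van a m (N+1) := by
  have hpos : ∀ r : ℕ, a N r m = 0 := by
    intro r
    by_cases hr : r ≤ m
    · by_cases h2 : r * r < 4 * N * m
      · exact h r hr h2
      · by_contra hne
        have := (coef_supp hF ha _ _ _ hne).2.2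
        apply h2
        have h3 : (r:ℤ) * r < 4 * N * m := by nlinarith
        exact_mod_cast h3
    · rw [coef_U hF ha 1 0 (-1) 1 1 (by norm_num) (by norm_num) N r m]
      rw [show ((N:ℤ) * 0^2 + r * (0 * 1) + m * 1^2) = m by ring, hV _ (by push Not at hr; zify at hr; linarith), symAct_zero]
  intro n hn r
  rcases lt_or_ge n N with h1 | h1
  · exact hV n h1 r
  · have : n = N := by push_cast at hn; omega
    subst this
    rcases Int.eq_nat_or_neg r with ⟨k, rfl | rfl⟩
    · exact hpos k
    · exact neg0 hF ha _ _ _ (hpos k)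

def chk (N M m μ : ℕ) : Prop :=
  (∀ n < M, N ≤ n → ∀ r ≤ m, r*r < 4*n*m → 2*r < Lb n (μ+1)) ∧ 2*m + 1 + μ < 12*M

instance (N M m μ : ℕ) : Decidable (chk N M m μ) := by unfold chk; infer_instance

lemma ordB (hF : IsCF j F) (ha : HasFE F a) {m N : ℕ} (μ M : ℕ) (hA : Van a m N)
    (h : chk N M m μ) : Ord a m μ :=
  ordW hF ha m N μ M hA (fun n hn hN r hr h1 h2 => absurd (h.1 n hn hN r hr h1) h2) h.2

lemma HO_upd {O : ℕ → ℕ} (hO : HO a O) (m μ : ℕ) (hm : m ≠ 0) (h : Ord a m μ) : HO a (Function.update O m μ) := by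
  intro k
  by_cases hk : k.toNat = m
  · rw [hk, Function.update_self]
    have : k = m := by omega
    rw [this]; exact h
  · rw [Function.update_of_ne hk]; exact hO k

lemma all_of_ord {m : ℤ} {μ : ℕ} (hμ : j < μ) (h : Ord a m μ) (n r : ℤ) : a n r m = 0 := by
  funext l; exact h n r l (by omega)

def T0 (m : ℕ) : ℕ := [0,8,6,4,4,3,3,2,2,2,2,2,2,1,1,1,1,1,1,1].getD m 0

lemma HO_T0 (hF : IsCF j F) (ha : HasFE F a) : HO a T0 := by
  intro m
  by_cases hm : 1 ≤ m ∧ m < 20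
  · obtain ⟨k, rfl⟩ : ∃ k : ℕ, m = k := ⟨m.toNat, by omega⟩
    have h1 : ∀ k < 20, 1 ≤ k → chk 1 5 k (T0 k) := by
      decide +kernel
    exact ordB hF ha _ 5 (van_one hF ha k) (h1 k (by omega) (by omega))
  · have : T0 m.toNat = 0 := by
      unfold T0
      rcases lt_or_ge m 1 with h | h
      · rw [show m.toNat = 0 by omega]; rfl
      · rw [List.getD_eq_default]
        simp; omega
    rw [this]
    intro n r l hl
    exact absurd l.2 (by omega)

lemma index1 (hF : IsCF j F) (ha : HasFE F a) (hj : j ≤ 52) (n r : ℤ) : a n r 1 = 0 := by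
  have h0 := HO_T0 hF ha
  have k11 : a 1 1 1 = 0 := kill hF ha hj h0 1 1 1 (by decide +kernel)
  have v1 : Van a ((1:ℕ):ℤ) 1 := van_one hF ha 1
  have o1 : Ord a ((1:ℕ):ℤ) 10 := by
    refine ordW hF ha 1 1 10 5 v1 ?_ (by norm_num)
    intro n hn hN r hr h1 h2
    have h3 : ∀ n < 5, 1 ≤ n → ∀ r ≤ 1, 2*r < Lb n (10+1) ∨ (n = 1 ∧ r = 1) := by
      decide +kernel
    obtain ⟨rfl, rfl⟩ := (h3 n hn hN r hr).resolve_left h2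
    exact ⟨k11, neg0 hF ha 1 1 1 k11⟩
  have h1 := HO_upd h0 1 10 (by norm_num) o1
  have v2 : Van a ((1:ℕ):ℤ) (1+1) := by
    refine van_succ hF ha 1 1 v1 ?_
    intro r hr _
    interval_cases r
    · exact kill hF ha hj h1 1 0 1 (by decide +kernel)
    · exact k11
  have h2 := HO_upd h0 1 20 (by norm_num) (ordB hF ha 20 5 v2 (by decide +kernel))
  have v3 : Van a ((1:ℕ):ℤ) (2+1) := by
    refine van_succ hF ha 1 2 v2 ?_
    intro r hr _
    interval_cases r
    · exact kill hF ha hj h2 2 0 1 (by decide +kernel)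
    · exact kill hF ha hj h2 2 1 1 (by decide +kernel)
  have h3 := HO_upd h0 1 32 (by norm_num) (ordB hF ha 32 5 v3 (by decide +kernel))
  have v4 : Van a ((1:ℕ):ℤ) (3+1) := by
    refine van_succ hF ha 1 3 v3 ?_
    intro r hr _
    interval_cases r
    · exact kill hF ha hj h3 3 0 1 (by decide +kernel)
    · exact kill hF ha hj h3 3 1 1 (by decide +kernel)
  have h4 := HO_upd h0 1 44 (by norm_num) (ordB hF ha 44 5 v4 (by decide +kernel))
  have v5 : Van a ((1:ℕ):ℤ) (4+1) := by
    refine van_succ hF ha 1 4 v4 ?_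
    intro r hr _
    interval_cases r
    · exact kill hF ha hj h4 4 0 1 (by decide +kernel)
    · exact kill hF ha hj h4 4 1 1 (by decide +kernel)
  exact all_of_ord (by omega) (ordB hF ha 56 5 v5 (by decide +kernel)) n r

/-- orders when all indices below `N` vanish, `N ≥ 2` -/
def T1 (m : ℕ) : ℕ := [0,0,18,16,14,12].getD m 0
def T2 (m : ℕ) : ℕ := [0,0,0,28,26,24].getD m 0
def T3 (m : ℕ) : ℕ := [0,0,0,0,38,36].getD m 0
def T4 (m : ℕ) : ℕ := [0,0,0,0,0,48].getD m 0

lemma HO_tab (hF : IsCF j F) (ha : HasFE F a) (O : ℕ → ℕ) (N : ℕ) (hV : ∀ m : ℤ, Van a m N)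
    (hz : O 0 = 0 ∧ ∀ k, 6 ≤ k → O k = 0)
    (h1 : ∀ k < 6, 1 ≤ k → chk N 8 k (O k)) :
    HO a O := by
  intro m
  by_cases hm : 1 ≤ m ∧ m < 6
  · obtain ⟨k, rfl⟩ : ∃ k : ℕ, m = k := ⟨m.toNat, by omega⟩
    exact ordB hF ha _ 8 (hV k) (h1 k (by omega) (by omega))
  · have : O m.toNat = 0 := by
      rcases lt_or_ge m 1 with h | h
      · rw [show m.toNat = 0 by omega]; exact hz.1
      · exact hz.2 _ (by omega)
    rw [this]
    intro n r l hl
    exact absurd l.2 (by omega)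

lemma van_all (hF : IsCF j F) (ha : HasFE F a) (N : ℕ) (h : ∀ k : ℕ, k < N → ∀ n r, a n r k = 0) (m : ℤ) :
    Van a m N := by
  intro n hn r
  by_cases h0 : n < 1
  · exact van_one hF ha m n (by exact_mod_cast h0) r
  · obtain ⟨k, rfl⟩ : ∃ k : ℕ, n = k := ⟨n.toNat, by omega⟩
    exact swap0 hF ha _ _ _ (h k (by exact_mod_cast hn) _ _)

lemma step (hF : IsCF j F) (ha : HasFE F a) (hj : j ≤ 52) {O : ℕ → ℕ} (hO : HO a O) (m N : ℕ) (hV : Van a m N)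
    (h : ∀ r ≤ m, 52 < O m + ∑ v ∈ VL, O ((N:ℤ) * v.1^2 + (r:ℤ) * (v.1 * v.2) + (m:ℤ) * v.2^2).toNat) :
    Van a m (N+1) :=
  van_succ hF ha m N hV fun r hr _ => kill hF ha hj hO N r m (by simpa using h r hr)

lemma index2 (hF : IsCF j F) (ha : HasFE F a) (hj : j ≤ 52) (hV : ∀ m : ℤ, Van a m 2) (n r : ℤ) : a n r (2:ℕ) = 0 := by
  have h0 := HO_tab hF ha T1 2 hV ⟨rfl, fun k hk => List.getD_eq_default _ _ (by simpa using hk)⟩ (by decide +kernel)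
  have v3 := step hF ha hj h0 2 2 (hV _) (by decide +kernel)
  have h1 := HO_upd h0 2 30 (by norm_num) (ordB hF ha 30 8 v3 (by decide +kernel))
  have v4 := step hF ha hj h1 2 3 v3 (by decide +kernel)
  have h2 := HO_upd h0 2 42 (by norm_num) (ordB hF ha 42 8 v4 (by decide +kernel))
  have v5 := step hF ha hj h2 2 4 v4 (by decide +kernel)
  exact all_of_ord (by omega) (ordB hF ha 53 8 v5 (by decide +kernel)) n r

lemma index3 (hF : IsCF j F) (ha : HasFE F a) (hj : j ≤ 52) (hV : ∀ m : ℤ, Van a m 3) (n r : ℤ) : a n r (3:ℕ) = 0 := by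
  have h0 := HO_tab hF ha T2 3 hV ⟨rfl, fun k hk => List.getD_eq_default _ _ (by simpa using hk)⟩ (by decide +kernel)
  have v3 := step hF ha hj h0 3 3 (hV _) (by decide +kernel)
  have h1 := HO_upd h0 3 40 (by norm_num) (ordB hF ha 40 8 v3 (by decide +kernel))
  have v4 := step hF ha hj h1 3 4 v3 (by decide +kernel)
  have h2 := HO_upd h0 3 52 (by norm_num) (ordB hF ha 52 8 v4 (by decide +kernel))
  have v5 := step hF ha hj h2 3 5 v4 (by decide +kernel)
  exact all_of_ord (by omega) (ordB hF ha 53 8 v5 (by decide +kernel)) n r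

lemma index4 (hF : IsCF j F) (ha : HasFE F a) (hj : j ≤ 52) (hV : ∀ m : ℤ, Van a m 4) (n r : ℤ) : a n r (4:ℕ) = 0 := by
  have h0 := HO_tab hF ha T3 4 hV ⟨rfl, fun k hk => List.getD_eq_default _ _ (by simpa using hk)⟩ (by decide +kernel)
  have v3 := step hF ha hj h0 4 4 (hV _) (by decide +kernel)
  have h1 := HO_upd h0 4 50 (by norm_num) (ordB hF ha 50 8 v3 (by decide +kernel))
  have v4 := step hF ha hj h1 4 5 v3 (by decide +kernel)
  exact all_of_ord (by omega) (ordB hF ha 53 8 v4 (by decide +kernel)) n r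

lemma index5 (hF : IsCF j F) (ha : HasFE F a) (hj : j ≤ 52) (hV : ∀ m : ℤ, Van a m 5) (n r : ℤ) : a n r (5:ℕ) = 0 := by
  have h0 := HO_tab hF ha T4 5 hV ⟨rfl, fun k hk => List.getD_eq_default _ _ (by simpa using hk)⟩ (by decide +kernel)
  have v3 := step hF ha hj h0 5 5 (hV _) (by decide +kernel)
  exact all_of_ord (by omega) (ordB hF ha 53 8 v3 (by decide +kernel)) n r

lemma index_all (hF : IsCF j F) (ha : HasFE F a) (hj : j ≤ 52) (k : ℕ) : ∀ n r, a n r k = 0 := by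
  induction k using Nat.strong_induction_on with
  | _ k ih =>
    have hV := van_all hF ha k ih
    rcases lt_or_ge k 6 with h | h
    · interval_cases k
      · intro n r
        by_contra hne
        have := (coef_supp hF ha _ _ _ hne).2.1
        simp at this
      · exact index1 hF ha hj
      · exact index2 hF ha hj hV
      · exact index3 hF ha hj hV
      · exact index4 hF ha hj hV
      · exact index5 hF ha hj hV
    · exact all_of_ord (μ := 53) (by omega) (ordB hF ha 53 k (hV k) ⟨fun n hn hN => by omega, by omega⟩)

lemma CF_zero (hF : IsCF j F) (hj : j ≤ 52) : F = 0 := by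
  obtain ⟨a, ha⟩ := CF_fourier hF
  refine F_zero hF ha ?_
  intro n r m
  by_contra hne
  have := (coef_supp hF ha _ _ _ hne).2.1
  obtain ⟨k, rfl⟩ : ∃ k : ℕ, m = k := ⟨m.toNat, by omega⟩
  exact hne (index_all hF ha hj k n r)

end SV

/-- For every integer `j` with `0 ≤ j ≤ 52`, the space `S_{j,2}(Γ₂)` of Siegel cusp forms of
degree 2 and weight `(j,2)` on the full Siegel modular group `Γ₂ = Sp(4,ℤ)` is zero. -/
theorem vanishing_Sj2_level_one (j : ℕ) (hj : j ≤ 52) :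
    SiegelCusp j 2 Sp4Z (fun _ => 1) = ⊥ := by
  exact (Submodule.eq_bot_iff _).2 fun _ hF => SV.CF_zero hF hj
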